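/- Suppose C(x,y) = y₁·F(x₁,…,x_r) + Σ_{j=1}^{m} x_j q_j(y) + R(y), where F is a nonsingular positive definite integral quadratic form in r variables with 5 ≤ r ≤ m, and suppose that for some 1 ≤ i ≤ r the polynomial y₁ does not divide q_i(y) in ℤ[y₁,…,y_h]. Then there exist c > 0 and B₀ such that N(B) ≥ c · B^{n−h−2+(h−1)/2} for all B ≥ B₀. -/

import Mathlib

open MvPolynomial

/-!
Over `ℤ` there are coordinates `x = M u` in which `F` is a diagonal form `∑ aᵢ uᵢ²`. Since `y₁`
does not divide `q_i`, some coefficient of the linear part `∑ uᵢ ℓᵢ(y)` in these coordinates is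
nonzero at a point `v` with `v₁ = 0`. Fix `y₁` as a suitable constant and let `y` run over the
points near `T v` congruent to `v` modulo that constant. After a rescaling, the remaining equation
is `∑ (Aᵢ uᵢ² + bᵢ uᵢ) + N = 0` with fixed `Aᵢ`, with `bᵢ = O(T²)` and with `N` small compared to
`T⁴`; some `A_{i₀}` is divisible by all small and all bad primes, and `b_{i₀}` is prime to it and of
exact order `T²`. The equation describes an ellipsoid of squared radius `≍ T⁴`.

The circle method counts the points `u` on it. Damped theta series are approximated on Dirichlet
arcs by Poisson summation and Gauss sums. An arc whose denominator has a small or bad prime factor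
contributes nothing to the main term, because `A_{i₀}` vanishes modulo that prime while `b_{i₀}`
does not. Hence the singular series is close to `1` and there are `≫ (T⁴)^(r/2 - 1)` points `u`,
uniformly in `y`.

Multiply by the `≍ T^(h - 1)` choices of `y` and the `≍ (T²)^(m - r)` choices of the variables
`x_j` with `j > r`, and take `T ≍ √B`.
-/

namespace CircleMethod

open Complex Finset Filter MeasureTheory
open scoped Real Topology

/-! ### Quadratic Gauss sums -/

section GaussSum

variable {q : ℕ} [NeZero q]

/-- The quadratic Gauss sum `∑ₓ e((α x² + γ x) / q)`. -/
noncomputable def quadGaussSum (α γ : ZMod q) : ℂ :=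
  ∑ x : ZMod q, ZMod.stdAddChar (α * x ^ 2 + γ * x)

/-- Weyl differencing: after the shift `x ↦ x + y`, the sum over `y` is a complete linear sum. -/
lemma quadGaussSum_mul_conj (α γ : ZMod q) :
    quadGaussSum α γ * (starRingEnd ℂ) (quadGaussSum α γ) =
      ∑ h : ZMod q, ZMod.stdAddChar (α * h ^ 2 + γ * h) *
        (if 2 * α * h = 0 then (q : ℂ) else 0) := by
  have shift (y : ZMod q) :
      ∑ x : ZMod q, (ZMod.stdAddChar (α * x ^ 2 + γ * x + -(α * y ^ 2 + γ * y)) : ℂ) =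
        ∑ h : ZMod q,
          ZMod.stdAddChar (α * h ^ 2 + γ * h) * ZMod.stdAddChar (y * (2 * α * h)) := by
    rw [← Equiv.sum_comp (Equiv.addRight y)]
    refine sum_congr rfl fun h _ => ?_
    rw [← AddChar.map_add_eq_mul, Equiv.coe_addRight]
    congr 1
    ring
  rw [quadGaussSum, map_sum, sum_mul_sum, sum_comm]
  simp_rw [← AddChar.map_neg_eq_conj, ← AddChar.map_add_eq_mul, shift]
  rw [sum_comm]
  refine sum_congr rfl fun h _ => ?_
  rw [← mul_sum, AddChar.sum_mulShift _ (ZMod.isPrimitive_stdAddChar q)]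
  simp [ZMod.card]

lemma sq_norm_quadGaussSum_le (α γ : ZMod q) :
    ‖quadGaussSum α γ‖ ^ 2 ≤ q * #{h : ZMod q | 2 * α * h = 0} := by
  have hsq : ‖quadGaussSum α γ‖ ^ 2 = ‖quadGaussSum α γ * (starRingEnd ℂ) (quadGaussSum α γ)‖ := by
    rw [norm_mul, RCLike.norm_conj, sq]
  rw [hsq, quadGaussSum_mul_conj, card_filter, Nat.cast_sum, mul_sum]
  refine (norm_sum_le _ _).trans (sum_le_sum fun h _ => ?_)
  rw [norm_mul, AddChar.norm_apply]
  split_ifs <;> simp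

lemma card_two_mul_mul_eq_zero_le {a : ZMod q} (ha : IsUnit a) {A : ℕ} (hA : 0 < A) :
    #{h : ZMod q | 2 * (a * (A : ZMod q)) * h = 0} ≤ 2 * A := by
  refine le_trans (card_le_card fun h => ?_)
    (IsAddCyclic.card_nsmul_eq_zero_le (α := ZMod q) (n := 2 * A) (by omega))
  simp only [mem_filter, mem_univ, true_and, nsmul_eq_mul, Nat.cast_mul, Nat.cast_ofNat]
  intro hh
  refine ha.mul_right_eq_zero.1 ?_
  rw [← hh]
  ring

lemma card_two_mul_mul_eq_zero_le_one {a : ZMod q} (ha : IsUnit a) {A : ℕ}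
    (hA : q.Coprime (2 * A)) :
    #{h : ZMod q | 2 * (a * (A : ZMod q)) * h = 0} ≤ 1 := by
  have hunit : IsUnit ((2 * A : ℕ) : ZMod q) := (ZMod.isUnit_iff_coprime _ _).2 hA.symm
  have eq_zero (h : ZMod q) (hh : 2 * (a * (A : ZMod q)) * h = 0) : h = 0 := by
    refine hunit.mul_right_eq_zero.1 (ha.mul_right_eq_zero.1 ?_)
    rw [← hh]
    push_cast
    ring
  refine card_le_one.2 fun x hx y hy => ?_
  rw [eq_zero x (mem_filter.1 hx).2, eq_zero y (mem_filter.1 hy).2]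

lemma norm_quadGaussSum_le {a : ZMod q} (ha : IsUnit a) {A : ℕ} (hA : 0 < A) (γ : ZMod q) :
    ‖quadGaussSum (a * (A : ZMod q)) γ‖ ≤ √(2 * A * q) := by
  refine Real.le_sqrt_of_sq_le ((sq_norm_quadGaussSum_le _ γ).trans ?_)
  rw [mul_comm (2 * A : ℝ)]
  gcongr
  exact_mod_cast card_two_mul_mul_eq_zero_le ha hA

lemma norm_quadGaussSum_le_of_coprime {a : ZMod q} (ha : IsUnit a) {A : ℕ}
    (hA : q.Coprime (2 * A)) (γ : ZMod q) :
    ‖quadGaussSum (a * (A : ZMod q)) γ‖ ≤ √q := by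
  refine Real.le_sqrt_of_sq_le ((sq_norm_quadGaussSum_le _ γ).trans ?_)
  refine mul_le_of_le_one_right (Nat.cast_nonneg q) ?_
  exact_mod_cast card_two_mul_mul_eq_zero_le_one ha hA

lemma quadGaussSum_eq_mul_of_shift {α γ t : ZMod q} (ht : α * t = 0) :
    quadGaussSum α γ = ZMod.stdAddChar (γ * t) * quadGaussSum α γ := by
  conv_lhs => rw [quadGaussSum, ← Equiv.sum_comp (Equiv.addRight t)]
  rw [quadGaussSum, mul_sum]
  refine sum_congr rfl fun x _ => ?_
  rw [← AddChar.map_add_eq_mul, Equiv.coe_addRight]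
  congr 1
  linear_combination (2 * x + t) * ht

lemma quadGaussSum_eq_zero_of_shift {α γ t : ZMod q} (ht : α * t = 0) (hγ : γ * t ≠ 0) :
    quadGaussSum α γ = 0 := by
  have hchar : (ZMod.stdAddChar (γ * t) : ℂ) ≠ 1 := fun h =>
    hγ (ZMod.injective_stdAddChar (h.trans (AddChar.map_zero_eq_one _).symm))
  by_contra h0
  exact hchar (mul_right_cancel₀ h0
    ((quadGaussSum_eq_mul_of_shift ht).symm.trans (one_mul _).symm))

lemma quadGaussSum_eq_zero_of_prime_dvd {a : ZMod q} (ha : IsUnit a) {A p : ℕ} {b : ℤ}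
    (hpq : p ∣ q) (hpA : p ∣ A) (hpb : ¬ (p : ℤ) ∣ b) :
    quadGaussSum (a * (A : ZMod q)) (a * (b : ZMod q)) = 0 := by
  obtain ⟨t, ht⟩ := hpq
  obtain ⟨A', rfl⟩ := hpA
  have ht0 : (t : ℤ) ≠ 0 := by
    rintro h
    exact NeZero.ne q (by rw [ht, Int.natCast_eq_zero.1 h, mul_zero])
  refine quadGaussSum_eq_zero_of_shift (t := t) ?_ ?_
  · have hq : ((p * t : ℕ) : ZMod q) = 0 := by rw [← ht, ZMod.natCast_self]
    push_cast at hq ⊢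
    linear_combination (a * A') * hq
  · rw [mul_assoc, Ne, ha.mul_right_eq_zero]
    intro h
    have hdvd : (q : ℤ) ∣ b * t := by
      rw [← ZMod.intCast_zmod_eq_zero_iff_dvd]
      push_cast
      exact h
    rw [ht, Nat.cast_mul] at hdvd
    exact hpb (Int.dvd_of_mul_dvd_mul_right ht0 hdvd)

end GaussSum

/-! ### Theta series near rational points -/

section ComplexFrequency

variable {l : ℝ} (β : ℝ)

/-- The complex frequency `l + 2πiβ`: `exp (-cfreq l β * s)` combines the damping `exp (-l s)` with
the additive character `e(-β s)`. -/
noncomputable def cfreq (l β : ℝ) : ℂ := l + 2 * π * I * β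

@[simp] lemma cfreq_re : (cfreq l β).re = l := by simp [cfreq]

lemma sq_norm_cfreq : ‖cfreq l β‖ ^ 2 = l ^ 2 + (2 * π * β) ^ 2 := by
  have him : (cfreq l β).im = 2 * π * β := by simp [cfreq]
  rw [← Complex.normSq_eq_norm_sq, Complex.normSq_apply, cfreq_re, him]
  ring

lemma le_norm_cfreq : l ≤ ‖cfreq l β‖ := by
  simpa only [cfreq_re] using Complex.re_le_norm (cfreq l β)

lemma abs_le_norm_cfreq : 2 * π * |β| ≤ ‖cfreq l β‖ := by
  refine abs_le_of_sq_le_sq' ?_ (norm_nonneg _) |>.2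
  rw [sq_norm_cfreq, mul_pow, sq_abs, ← mul_pow]
  exact le_add_of_nonneg_left (sq_nonneg l)

variable (hl : 0 < l)
include hl

lemma norm_cfreq_pos : 0 < ‖cfreq l β‖ := hl.trans_le (le_norm_cfreq β)

lemma cfreq_ne_zero : cfreq l β ≠ 0 := norm_pos_iff.1 (norm_cfreq_pos β hl)

end ComplexFrequency

section Theta

lemma summable_cexp_neg_quadratic {t : ℂ} (ht : 0 < t.re) (z : ℂ) :
    Summable fun n : ℤ => cexp (-π * t * n ^ 2 + 2 * π * I * n * z) := by
  refine ((summable_jacobiTheta₂_term_iff z (I * t)).2 (by simpa using ht)).congr fun n => ?_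
  rw [jacobiTheta₂_term]
  congr 1
  linear_combination (π * (n : ℂ) ^ 2 * t) * I_sq

lemma tsum_cexp_neg_sq_add {τ : ℂ} (hτ : 0 < τ.re) (x : ℂ) :
    ∑' v : ℤ, cexp (-(π / τ * (v + x) ^ 2)) =
      τ ^ (1 / 2 : ℂ) * ∑' n : ℤ, cexp (-π * τ * n ^ 2 + 2 * π * I * n * (-x)) := by
  have hτ0 : τ ≠ 0 := by
    rintro rfl
    simp at hτ
  have hsqrt : τ ^ (1 / 2 : ℂ) ≠ 0 := Complex.cpow_ne_zero_iff.2 (Or.inl hτ0)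
  have left (v : ℤ) : -(π / τ * (v + x) ^ 2) = -π / τ * (v + I * (-I * x)) ^ 2 := by
    have hx : I * (-I * x) = x := by linear_combination (-x) * I_sq
    rw [hx]
    ring
  have right (n : ℤ) : -π * τ * n ^ 2 + 2 * π * I * n * (-x) =
      -π * τ * n ^ 2 + 2 * π * (-I * x) * n := by ring
  simp_rw [left, right, Complex.tsum_exp_neg_quadratic hτ (-I * x)]
  field_simp

lemma tsum_int_eq_sum_zmod (q : ℕ) [NeZero q] {f : ℤ → ℂ} (hf : Summable f) :
    ∑' n : ℤ, f n = ∑ ρ : ZMod q, ∑' v : ℤ, f (v * q + ρ.val) := by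
  let e : Fin q × ℤ ≃ ℤ := (Equiv.prodComm (Fin q) ℤ).trans (Int.divModEquiv q).symm
  have hs : Summable fun p => f (e p) := e.summable_iff.2 hf
  rw [← e.tsum_eq f, hs.tsum_prod, tsum_fintype]
  cases q with
  | zero => exact absurd rfl (NeZero.ne 0)
  | succ k => rfl

lemma hasSum_exp_neg_mul_sq {x : ℝ} (hx : 0 < x) :
    HasSum (fun n : ℤ => Real.exp (-π * x * n ^ 2)) (jacobiTheta (I * x)).re := by
  have h := (hasSum_jacobiTheta₂_term 0 (τ := I * x) (by simpa using hx)).mapL Complex.reCLM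
  rw [← jacobiTheta_eq_jacobiTheta₂] at h
  refine h.congr_fun fun n => ?_
  rw [Complex.reCLM_apply, jacobiTheta₂_term, ← Complex.ofReal_re (Real.exp _), Complex.ofReal_exp]
  congr 2
  push_cast
  linear_combination (-(π * (n : ℂ) ^ 2 * x)) * I_sq

lemma re_jacobiTheta_sub_one_le {x : ℝ} (hx : 0 < x) : (jacobiTheta (I * x)).re - 1 ≤ 2 / x := by
  have hπx : 0 < π * x := mul_pos Real.pi_pos hx
  have hexp : Real.exp (-(π * x)) < 1 := Real.exp_lt_one_iff.2 (neg_neg_of_pos hπx)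
  calc (jacobiTheta (I * x)).re - 1 = (jacobiTheta (I * x) - 1).re := by simp
    _ ≤ 2 / (1 - Real.exp (-(π * x))) * Real.exp (-(π * x)) := by
      refine (Complex.re_le_norm _).trans ?_
      simpa using norm_jacobiTheta_sub_one_le (τ := I * x) (by simpa using hx)
    _ ≤ 2 / x := by
      rw [div_mul_eq_mul_div, div_le_div_iff₀ (sub_pos.2 hexp) hx]
      have h1 : (x + 1) * Real.exp (-(π * x)) ≤ 1 := by
        calc (x + 1) * Real.exp (-(π * x)) ≤ Real.exp (π * x) * Real.exp (-(π * x)) := by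
              gcongr
              nlinarith [Real.add_one_le_exp (π * x), Real.pi_gt_three]
          _ = 1 := by rw [← Real.exp_add, add_neg_cancel, Real.exp_zero]
      linarith

lemma norm_tsum_sub_zero_le {f : ℤ → ℂ} {x g : ℝ} (hx : 0 < x)
    (hf : ∀ n, ‖f n‖ ≤ Real.exp (-π * x * n ^ 2) * g) :
    ‖(∑' n, f n) - f 0‖ ≤ g * (2 / x) := by
  have hsum := hasSum_exp_neg_mul_sq hx
  have hg : 0 ≤ g := by simpa using (norm_nonneg _).trans (hf 0)
  have hsummable : Summable f := .of_norm_bounded (hsum.summable.mul_right g) hf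
  have htail : HasSum (fun n : ℤ => if n = 0 then 0 else Real.exp (-π * x * n ^ 2) * g)
      (((jacobiTheta (I * x)).re - 1) * g) := by
    have h := (hsum.mul_right g).sub (hasSum_ite_eq (0 : ℤ) g)
    rw [← sub_one_mul] at h
    refine h.congr_fun fun n => ?_
    split_ifs with hn <;> simp [hn]
  rw [hsummable.tsum_eq_add_tsum_ite 0, add_sub_cancel_left]
  refine (tsum_of_norm_bounded htail fun n => ?_).trans ?_
  · split_ifs
    · exact norm_zero.le
    · exact hf n
  · rw [mul_comm]
    exact mul_le_mul_of_nonneg_left (re_jacobiTheta_sub_one_le hx) hg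

/-- The `n`-th term of the damped theta series of `A n² + b n`; the damping is centred at the vertex
`-b / (2A)`. -/
noncomputable def thetaTerm (A : ℕ) (b : ℤ) (l α : ℝ) (n : ℤ) : ℂ :=
  cexp (-(l * A * ((n : ℂ) + b / (2 * A)) ^ 2) - 2 * π * I * α * (A * (n : ℂ) ^ 2 + b * n))

/-- The damped theta series `∑ₙ exp (-l A (n + b/(2A))²) e(-α (A n² + b n))`. -/
noncomputable def thetaSeries (A : ℕ) (b : ℤ) (l α : ℝ) : ℂ := ∑' n : ℤ, thetaTerm A b l α n

/-- The parameter `π / (w A q²)` of the Gaussian obtained from `exp (-w A q² x²)` by Poisson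
summation. -/
noncomputable def poissonParam (A q : ℕ) (w : ℂ) : ℂ := π / (w * A * q ^ 2)

lemma poissonParam_eq_mul_inv (A q : ℕ) (w : ℂ) :
    poissonParam A q w = ((π / (A * q ^ 2) : ℝ) : ℂ) * w⁻¹ := by
  rw [poissonParam]
  push_cast
  rw [div_eq_mul_inv, div_eq_mul_inv, mul_inv, mul_inv, mul_inv]
  ring

lemma poissonParam_re (A q : ℕ) (w : ℂ) :
    (poissonParam A q w).re = π * w.re / (‖w‖ ^ 2 * A * q ^ 2) := by
  rw [poissonParam_eq_mul_inv, Complex.re_ofReal_mul, Complex.inv_re, Complex.normSq_eq_norm_sq]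
  ring

variable {A q : ℕ} (b a : ℤ) {l : ℝ} (β : ℝ)

lemma summable_thetaTerm (hA : 0 < A) (hl : 0 < l) : Summable (thetaTerm A b l β) := by
  have hA' : (A : ℂ) ≠ 0 := by exact_mod_cast hA.ne'
  have hπ : (π : ℂ) ≠ 0 := by exact_mod_cast Real.pi_ne_zero
  have hre : 0 < ((A / π : ℝ) * cfreq l β).re := by
    rw [re_ofReal_mul, cfreq_re]
    positivity
  refine ((summable_cexp_neg_quadratic hre (-(l * b / (2 * π * I)) - β * b)).mul_left
    (cexp (-(l * A * ((b : ℂ) / (2 * A)) ^ 2)))).congr fun n => ?_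
  rw [thetaTerm, ← Complex.exp_add, cfreq]
  congr 1
  push_cast
  field_simp
  ring

lemma norm_cexp_phase (x : ℝ) : ‖cexp (2 * π * I * x)‖ = 1 := by
  rw [show (2 * π * I * x : ℂ) = ((2 * π * x : ℝ) : ℂ) * I by push_cast; ring,
    Complex.norm_exp_ofReal_mul_I]

/-- `e(β b² / (4A))`, produced by completing the square. -/
noncomputable def vertexPhase (A : ℕ) (b : ℤ) (β : ℝ) : ℂ :=
  cexp (2 * π * I * ((β * (b ^ 2 / (4 * A)) : ℝ) : ℂ))

variable [NeZero q]

lemma thetaTerm_residue (hA : 0 < A) (hl : 0 < l) (ρ : ZMod q) (v : ℤ) :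
    thetaTerm A b l (β - a / q) (v * q + ρ.val) =
      vertexPhase A b β * ZMod.stdAddChar (a * A * ρ ^ 2 + a * b * ρ : ZMod q) *
        cexp (-(π / poissonParam A q (cfreq l β) * (v + (ρ.val + b / (2 * A)) / q) ^ 2)) := by
  have hA' : (A : ℂ) ≠ 0 := by exact_mod_cast hA.ne'
  have hq' : (q : ℂ) ≠ 0 := by exact_mod_cast NeZero.ne q
  have : (l + 2 * π * I * β : ℂ) ≠ 0 := cfreq_ne_zero β hl
  have hchar : (a * A * ρ ^ 2 + a * b * ρ : ZMod q) =
      ((a * (A * (v * q + ρ.val) ^ 2 + b * (v * q + ρ.val)) : ℤ) : ZMod q) := by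
    push_cast
    simp only [CharP.cast_eq_zero, mul_zero, zero_add, ZMod.natCast_val, ZMod.cast_id', id_eq]
    ring
  rw [hchar, ZMod.stdAddChar_coe, vertexPhase, ← Complex.exp_add, ← Complex.exp_add, thetaTerm,
    poissonParam, cfreq]
  congr 1
  push_cast
  field_simp
  ring

lemma tsum_thetaTerm_residue (hA : 0 < A) (hl : 0 < l)
    (hτ : 0 < (poissonParam A q (cfreq l β)).re) (ρ : ZMod q) :
    ∑' v : ℤ, thetaTerm A b l (β - a / q) (v * q + ρ.val) =
      ∑' n : ℤ, vertexPhase A b β * poissonParam A q (cfreq l β) ^ (1 / 2 : ℂ) *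
        (cexp (-π * poissonParam A q (cfreq l β) * n ^ 2 +
            2 * π * I * n * (-(b / (2 * A * q)))) *
          ZMod.stdAddChar (a * A * ρ ^ 2 + (a * b - n) * ρ : ZMod q)) := by
  have hA' : (A : ℂ) ≠ 0 := by exact_mod_cast hA.ne'
  have hq' : (q : ℂ) ≠ 0 := by exact_mod_cast NeZero.ne q
  simp_rw [thetaTerm_residue b a β hA hl]
  rw [tsum_mul_left, tsum_cexp_neg_sq_add hτ, ← mul_assoc, ← tsum_mul_left]
  refine tsum_congr fun n => ?_
  have hchar : (a * A * ρ ^ 2 + (a * b - n) * ρ : ZMod q) =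
      a * A * ρ ^ 2 + a * b * ρ + ((-n * ρ.val : ℤ) : ZMod q) := by
    push_cast
    simp only [ZMod.natCast_val, ZMod.cast_id', id_eq]
    ring
  have hphase : -π * poissonParam A q (cfreq l β) * n ^ 2 +
        2 * π * I * n * (-((ρ.val + b / (2 * A)) / q)) =
      (-π * poissonParam A q (cfreq l β) * n ^ 2 + 2 * π * I * n * (-(b / (2 * A * q)))) +
        2 * π * I * ((-n * ρ.val : ℤ) : ℂ) / q := by
    push_cast
    field_simp
    ring
  rw [hchar, AddChar.map_add_eq_mul _ _ ((-n * ρ.val : ℤ) : ZMod q), ZMod.stdAddChar_coe, hphase,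
    Complex.exp_add]
  ring

lemma thetaSeries_eq_tsum_quadGaussSum (hA : 0 < A) (hl : 0 < l)
    (hτ : 0 < (poissonParam A q (cfreq l β)).re) :
    thetaSeries A b l (β - a / q) =
      vertexPhase A b β * poissonParam A q (cfreq l β) ^ (1 / 2 : ℂ) *
        ∑' n : ℤ, cexp (-π * poissonParam A q (cfreq l β) * n ^ 2 +
            2 * π * I * n * (-(b / (2 * A * q)))) *
          quadGaussSum (a * A : ZMod q) (a * b - n) := by
  rw [thetaSeries, tsum_int_eq_sum_zmod q (summable_thetaTerm b _ hA hl)]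
  simp_rw [tsum_thetaTerm_residue b a β hA hl hτ]
  rw [← Summable.tsum_finsetSum, ← tsum_mul_left]
  · simp_rw [← mul_sum]
    rfl
  · intro ρ _
    refine Summable.mul_left _ (Summable.of_norm ?_)
    refine (summable_cexp_neg_quadratic hτ (-(b / (2 * A * q)))).norm.congr fun n => ?_
    rw [norm_mul, AddChar.norm_apply, mul_one]

lemma poissonParam_cpow_half (hA : 0 < A) {w : ℂ} (hw : w ≠ 0) :
    poissonParam A q w ^ (1 / 2 : ℂ) = (√(π / A) / q : ℝ) * (w⁻¹) ^ (1 / 2 : ℂ) := by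
  have hq : 0 < q := NeZero.pos q
  have hpos : 0 < π / (A * q ^ 2) := by positivity
  have hsqrt : √(π / A) / q = √(π / (A * q ^ 2)) := by
    rw [← div_div, Real.sqrt_div' _ (sq_nonneg (q : ℝ)), Real.sqrt_sq q.cast_nonneg]
  rw [poissonParam_eq_mul_inv, hsqrt,
    Complex.cpow_def_of_ne_zero (mul_ne_zero (by exact_mod_cast hpos.ne') (inv_ne_zero hw)),
    Complex.log_ofReal_mul hpos (inv_ne_zero hw), add_mul, Complex.exp_add,
    Complex.cpow_def_of_ne_zero (inv_ne_zero hw), Real.sqrt_eq_rpow, Real.rpow_def_of_pos hpos]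
  push_cast
  rfl

lemma norm_inv_cpow_half (w : ℂ) : ‖(w⁻¹) ^ (1 / 2 : ℂ)‖ = √(1 / ‖w‖) := by
  rw [show (1 / 2 : ℂ) = ((1 / 2 : ℝ) : ℂ) by push_cast; rfl, Complex.norm_cpow_real, norm_inv,
    Real.sqrt_eq_rpow, one_div ‖w‖]

variable (A q l) in
/-- The `n = 0` term of the dual theta series: the expected size of `thetaSeries A b l (β - a / q)`
for small `β`. -/
noncomputable def localTerm : ℂ :=
  vertexPhase A b β * ((√(π / A) : ℝ) * ((cfreq l β)⁻¹) ^ (1 / 2 : ℂ)) *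
    (quadGaussSum (a * A : ZMod q) (a * b) / q)

lemma norm_localTerm :
    ‖localTerm A q b a l β‖ = √(π / A) * √(1 / ‖cfreq l β‖) *
      (‖quadGaussSum (a * A : ZMod q) (a * b)‖ / q) := by
  rw [localTerm, vertexPhase, norm_mul, norm_mul, norm_cexp_phase, norm_mul, norm_inv_cpow_half,
    norm_div, Complex.norm_real, Complex.norm_natCast, Real.norm_of_nonneg (Real.sqrt_nonneg _),
    one_mul]

omit [NeZero q] in
lemma sqrt_pi_div_mul_sqrt_div (hA : 0 < A) (hq : 0 < q) {x : ℝ} (hx : 0 < x) :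
    √(π / A) * √(1 / x) * (√(2 * A * q) / q) = √(2 * π / (x * q)) := by
  have hdiv : √(2 * A * q) / q = √(2 * A / q) := by
    rw [show (2 * A / q : ℝ) = 2 * A * q / q ^ 2 by field_simp, Real.sqrt_div' _ (sq_nonneg _),
      Real.sqrt_sq q.cast_nonneg]
  rw [hdiv, ← Real.sqrt_mul (by positivity), ← Real.sqrt_mul (by positivity)]
  congr 1
  field_simp

omit [NeZero q] in
lemma norm_cexp_neg_quadratic (τ : ℂ) (n : ℤ) :
    ‖cexp (-π * τ * n ^ 2 + 2 * π * I * n * (-(b / (2 * A * q))))‖ =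
      Real.exp (-π * τ.re * n ^ 2) := by
  have hexp : -π * τ * n ^ 2 + 2 * π * I * n * (-(b / (2 * A * q))) =
      ((-π * n ^ 2 : ℝ) : ℂ) * τ + 2 * π * I * ((n * (-(b / (2 * A * q))) : ℝ) : ℂ) := by
    push_cast
    ring
  rw [hexp, Complex.exp_add, norm_mul, norm_cexp_phase, mul_one, Complex.norm_exp,
    Complex.re_ofReal_mul, mul_right_comm]

lemma norm_thetaSeries_sub_localTerm_le (hA : 0 < A) (hl : 0 < l) (ha : IsUnit (a : ZMod q)) :
    ‖thetaSeries A b l (β - a / q) - localTerm A q b a l β‖ ≤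
      √(2 * π / (‖cfreq l β‖ * q)) * (‖cfreq l β‖ ^ 2 * A * q ^ 2 / l) := by
  have hw := norm_cfreq_pos β hl
  have hq : 0 < q := NeZero.pos q
  set w := cfreq l β with hwdef
  set τ := poissonParam A q w with hτdef
  have hτre : τ.re = π * l / (‖w‖ ^ 2 * A * q ^ 2) := by rw [hτdef, poissonParam_re, cfreq_re]
  have hτ : 0 < τ.re := by
    rw [hτre]
    positivity
  set f : ℤ → ℂ := fun n => cexp (-π * τ * n ^ 2 + 2 * π * I * n * (-(b / (2 * A * q)))) *
    quadGaussSum (a * A : ZMod q) (a * b - n) with hf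
  have hmain : localTerm A q b a l β = vertexPhase A b β * τ ^ (1 / 2 : ℂ) * f 0 := by
    rw [hτdef, poissonParam_cpow_half hA (cfreq_ne_zero β hl), hf, localTerm, ← hwdef]
    simp only [Int.cast_zero, sub_zero]
    push_cast
    simp only [zero_pow two_ne_zero, mul_zero, zero_mul, add_zero, Complex.exp_zero]
    ring
  have hdual : thetaSeries A b l (β - a / q) =
      vertexPhase A b β * τ ^ (1 / 2 : ℂ) * ∑' n, f n :=
    thetaSeries_eq_tsum_quadGaussSum b a β hA hl hτ
  have hfn (n : ℤ) : ‖f n‖ ≤ Real.exp (-π * τ.re * n ^ 2) * √(2 * A * q) := by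
    rw [hf, norm_mul, norm_cexp_neg_quadratic]
    exact mul_le_mul_of_nonneg_left (norm_quadGaussSum_le ha hA _) (Real.exp_nonneg _)
  rw [hdual, hmain, ← mul_sub, norm_mul, norm_mul,
    hτdef, poissonParam_cpow_half hA (cfreq_ne_zero β hl), norm_mul, norm_inv_cpow_half,
    Complex.norm_real, vertexPhase, norm_cexp_phase, one_mul,
    Real.norm_of_nonneg (by positivity), ← sqrt_pi_div_mul_sqrt_div hA hq hw]
  calc √(π / A) / q * √(1 / ‖w‖) * ‖∑' n, f n - f 0‖
      ≤ √(π / A) / q * √(1 / ‖w‖) * (√(2 * A * q) * (2 / τ.re)) := by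
        gcongr
        exact norm_tsum_sub_zero_le hτ hfn
    _ = √(π / A) * √(1 / ‖w‖) * (√(2 * A * q) / q) *
          (2 / π * (‖w‖ ^ 2 * A * q ^ 2 / l)) := by
        rw [hτre]
        field_simp
    _ ≤ √(π / A) * √(1 / ‖w‖) * (√(2 * A * q) / q) * (‖w‖ ^ 2 * A * q ^ 2 / l) := by
        refine mul_le_mul_of_nonneg_left (mul_le_of_le_one_left (by positivity) ?_) (by positivity)
        exact (div_le_one Real.pi_pos).2 Real.two_le_pi

end Theta

/-! ### The Gamma integral and its Fourier inversion -/

section GammaIntegral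

variable {a : ℝ}

lemma integrableOn_rpow_mul_exp_neg_mul (ha : 0 < a) {t : ℝ} (ht : 0 < t) :
    IntegrableOn (fun s : ℝ => s ^ (a - 1) * Real.exp (-t * s)) (Set.Ioi 0) := by
  simpa using
    integrableOn_rpow_mul_exp_neg_mul_rpow (p := 1) (s := a - 1) (by linarith) one_pos ht

lemma eqOn_re_pos_of_eq_ofReal {f g : ℂ → ℂ} (hf : AnalyticOnNhd ℂ f {z | 0 < z.re})
    (hg : AnalyticOnNhd ℂ g {z | 0 < z.re}) (hfg : ∀ t : ℝ, 0 < t → f t = g t) :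
    Set.EqOn f g {z | 0 < z.re} := by
  refine hf.eqOn_of_preconnected_of_frequently_eq hg
    (convex_halfSpace_re_gt 0).isPreconnected (z₀ := 1) (by simp) ?_
  have htends : Tendsto (fun t : ℝ => (t : ℂ)) (𝓝[>] 1) (𝓝[≠] 1) := by
    refine tendsto_nhdsWithin_iff.2 ⟨?_, ?_⟩
    · simpa using (Complex.continuous_ofReal.tendsto 1).mono_left nhdsWithin_le_nhds
    · filter_upwards [self_mem_nhdsWithin] with t ht
      exact Complex.ofReal_ne_one.2 (ne_of_gt ht)
  refine htends.frequently (Eventually.frequently ?_)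
  filter_upwards [self_mem_nhdsWithin] with t ht
  exact hfg t (one_pos.trans ht)

variable (a) in
/-- The measure `s ^ (a - 1) ds` on `(0, ∞)`; its complex moment generating function is the
integral of the Gamma function with a complex frequency. -/
noncomputable def powMeasure : Measure ℝ :=
  (volume.restrict (Set.Ioi (0 : ℝ))).withDensity fun s => ENNReal.ofReal (s ^ (a - 1))

lemma mem_integrableExpSet_powMeasure (ha : 0 < a) {t : ℝ} (ht : t < 0) :
    t ∈ ProbabilityTheory.integrableExpSet id (powMeasure a) := by
  change Integrable _ _
  rw [powMeasure, integrable_withDensity_iff_integrable_smul' (by fun_prop) (by simp)]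
  refine (integrableOn_rpow_mul_exp_neg_mul ha (neg_pos.2 ht)).congr_fun (fun s hs => ?_)
    measurableSet_Ioi
  simp only [id, smul_eq_mul, neg_neg, ENNReal.toReal_ofReal (Real.rpow_nonneg (le_of_lt hs) _)]

lemma complexMGF_powMeasure (z : ℂ) :
    ProbabilityTheory.complexMGF id (powMeasure a) z =
      ∫ s in Set.Ioi (0 : ℝ), ((s ^ (a - 1) : ℝ) : ℂ) * cexp (z * s) := by
  rw [ProbabilityTheory.complexMGF, powMeasure,
    integral_withDensity_eq_integral_toReal_smul (by fun_prop) (by simp)]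
  refine setIntegral_congr_fun measurableSet_Ioi fun s hs => ?_
  simp only [id, ENNReal.toReal_ofReal (Real.rpow_nonneg (le_of_lt hs) _)]
  rfl

lemma analyticOnNhd_complexMGF_powMeasure (ha : 0 < a) :
    AnalyticOnNhd ℂ (fun w => ProbabilityTheory.complexMGF id (powMeasure a) (-w))
      {w | 0 < w.re} := by
  refine ProbabilityTheory.analyticOnNhd_complexMGF.comp analyticOnNhd_id.neg fun w hw => ?_
  exact mem_interior.2 ⟨Set.Iio 0, fun t => mem_integrableExpSet_powMeasure ha, isOpen_Iio,
    by simpa using hw⟩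

lemma inv_mem_slitPlane_of_re_pos {w : ℂ} (hw : 0 < w.re) : w⁻¹ ∈ slitPlane := by
  refine Or.inl ?_
  rw [Complex.inv_re]
  exact div_pos hw (Complex.normSq_pos.2 fun h => by simp [h] at hw)

lemma analyticOnNhd_inv_cpow (c : ℂ) :
    AnalyticOnNhd ℂ (fun w : ℂ => w⁻¹ ^ c) {w | 0 < w.re} := fun w hw =>
  (analyticAt_id.inv fun h => by simp [show w = 0 from h] at hw).cpow analyticAt_const
    (inv_mem_slitPlane_of_re_pos hw)

lemma integral_rpow_mul_cexp_neg_mul_Ioi (ha : 0 < a) {w : ℂ} (hw : 0 < w.re) :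
    ∫ s in Set.Ioi (0 : ℝ), ((s ^ (a - 1) : ℝ) : ℂ) * cexp (-w * s) =
      w⁻¹ ^ (a : ℂ) * (Real.Gamma a : ℝ) := by
  rw [← complexMGF_powMeasure]
  refine eqOn_re_pos_of_eq_ofReal (analyticOnNhd_complexMGF_powMeasure ha)
    ((analyticOnNhd_inv_cpow a).mul analyticOnNhd_const) (fun t ht => ?_) hw
  have hint := congrArg ((↑) : ℝ → ℂ) (Real.integral_rpow_mul_exp_neg_mul_Ioi ha ht)
  rw [← integral_complex_ofReal] at hint
  simp only [complexMGF_powMeasure]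
  rw [← Complex.ofReal_inv, ← Complex.ofReal_cpow (inv_nonneg.2 ht.le),
    ← Complex.ofReal_mul, ← one_div, ← hint]
  refine setIntegral_congr_fun measurableSet_Ioi fun s _ => ?_
  simp

end GammaIntegral

section FourierInversion

variable {a l : ℝ}

variable (a l) in
/-- The Gamma kernel `s ^ (a - 1) e^{-l s}` supported on `(0, ∞)`. -/
noncomputable def gammaKernel : ℝ → ℂ :=
  (Set.Ioi (0 : ℝ)).indicator fun s => ((s ^ (a - 1) * Real.exp (-l * s) : ℝ) : ℂ)

lemma integrable_gammaKernel (ha : 0 < a) (hl : 0 < l) : Integrable (gammaKernel a l) :=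
  (integrable_indicator_iff measurableSet_Ioi).2 (integrableOn_rpow_mul_exp_neg_mul ha hl).ofReal

lemma continuousAt_gammaKernel {D : ℝ} (hD : 0 < D) : ContinuousAt (gammaKernel a l) D := by
  have hev : (fun s : ℝ => ((s ^ (a - 1) * Real.exp (-l * s) : ℝ) : ℂ)) =ᶠ[𝓝 D]
      gammaKernel a l := by
    filter_upwards [isOpen_Ioi.mem_nhds hD] with s hs
    rw [gammaKernel, Set.indicator_of_mem hs]
  refine ContinuousAt.congr (Complex.continuous_ofReal.continuousAt.comp ?_) hev
  exact (Real.continuousAt_rpow_const _ _ (Or.inl hD.ne')).mul (by fun_prop)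

lemma fourier_gammaKernel (ha : 0 < a) (hl : 0 < l) :
    FourierTransform.fourier (gammaKernel a l) =
      fun β => (cfreq l β)⁻¹ ^ (a : ℂ) * (Real.Gamma a : ℝ) := by
  ext β
  rw [← integral_rpow_mul_cexp_neg_mul_Ioi ha (by simpa using hl), Real.fourier_eq',
    ← integral_indicator measurableSet_Ioi, gammaKernel]
  refine integral_congr_ae (Eventually.of_forall fun s => ?_)
  by_cases hs : s ∈ Set.Ioi (0 : ℝ)
  · simp only [Set.indicator_of_mem hs, cfreq]
    push_cast
    rw [smul_eq_mul, mul_left_comm, ← Complex.exp_add]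
    congr 2
    simp only [RCLike.inner_apply, conj_trivial]
    push_cast
    ring
  · simp only [Set.indicator_of_notMem hs, smul_zero]

lemma integrable_one_div_sq_add_sq (hl : 0 < l) :
    Integrable fun β : ℝ => 1 / (l ^ 2 + β ^ 2) := by
  refine ((integrable_inv_one_add_sq.comp_div hl.ne').const_mul (1 / l ^ 2)).congr
    (Eventually.of_forall fun β => ?_)
  field_simp

lemma integral_one_div_sq_add_sq (hl : 0 < l) : ∫ β : ℝ, 1 / (l ^ 2 + β ^ 2) = π / l := by
  have hscale (β : ℝ) : 1 / (l ^ 2 + β ^ 2) = 1 / l ^ 2 * (1 + (β / l) ^ 2)⁻¹ := by field_simp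
  simp_rw [hscale]
  rw [integral_const_mul, Measure.integral_comp_div (fun x : ℝ => (1 + x ^ 2)⁻¹) l,
    integral_univ_inv_one_add_sq, abs_of_pos hl, smul_eq_mul]
  field_simp

lemma norm_inv_cpow_ofReal (a : ℝ) (w : ℂ) : ‖w⁻¹ ^ (a : ℂ)‖ = ‖w‖ ^ (-a) := by
  rw [Complex.norm_cpow_real, norm_inv, Real.inv_rpow (norm_nonneg _),
    Real.rpow_neg (norm_nonneg _)]

/-- Splitting `a = (a - 5/2) + 1/2 + 2` leaves the factor `‖w‖⁻²`, which is integrable in `β`. -/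
lemma norm_cfreq_rpow_neg_le (ha : 5 / 2 ≤ a) (hl : 0 < l) {κ β : ℝ} (hκ : 0 < κ)
    (hκw : κ ≤ ‖cfreq l β‖) :
    ‖cfreq l β‖ ^ (-a) ≤
      l ^ (-(a - 5 / 2)) * κ ^ (-(1 / 2) : ℝ) * (1 / (l ^ 2 + β ^ 2)) := by
  have hw := norm_cfreq_pos β hl
  have hsq : l ^ 2 + β ^ 2 ≤ ‖cfreq l β‖ ^ 2 := by
    have h1 : 1 ≤ (2 * π) ^ 2 := by nlinarith [Real.pi_gt_three]
    rw [sq_norm_cfreq, mul_pow]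
    nlinarith [mul_le_mul_of_nonneg_right h1 (sq_nonneg β)]
  have hsplit : ‖cfreq l β‖ ^ (-a) =
      ‖cfreq l β‖ ^ (-(a - 5 / 2)) * ‖cfreq l β‖ ^ (-(1 / 2) : ℝ) * (1 / ‖cfreq l β‖ ^ 2) := by
    rw [one_div (‖cfreq l β‖ ^ 2), ← Real.rpow_natCast, ← Real.rpow_neg hw.le,
      ← Real.rpow_add hw, ← Real.rpow_add hw]
    congr 1
    push_cast
    ring
  rw [hsplit]
  gcongr ?_ * ?_ * ?_
  · exact Real.rpow_le_rpow_of_nonpos hl (le_norm_cfreq β) (by linarith)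
  · exact Real.rpow_le_rpow_of_nonpos hκ hκw (by norm_num)
  · exact one_div_le_one_div_of_le (by positivity) hsq

lemma continuous_inv_cfreq_cpow (a : ℝ) (hl : 0 < l) :
    Continuous fun β : ℝ => (cfreq l β)⁻¹ ^ (a : ℂ) := by
  have hcfreq : Continuous (cfreq l) := by
    unfold cfreq
    fun_prop
  exact (hcfreq.inv₀ (cfreq_ne_zero · hl)).cpow continuous_const fun β =>
    inv_mem_slitPlane_of_re_pos (by rwa [cfreq_re])

lemma integrable_inv_cfreq_cpow (ha : 5 / 2 ≤ a) (hl : 0 < l) :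
    Integrable fun β : ℝ => (cfreq l β)⁻¹ ^ (a : ℂ) := by
  refine Integrable.mono'
    ((integrable_one_div_sq_add_sq hl).const_mul (l ^ (-(a - 5 / 2)) * l ^ (-(1 / 2) : ℝ)))
    (continuous_inv_cfreq_cpow a hl).aestronglyMeasurable (Eventually.of_forall fun β => ?_)
  rw [norm_inv_cpow_ofReal]
  exact norm_cfreq_rpow_neg_le ha hl hl (le_norm_cfreq β)

lemma integral_cexp_mul_inv_cfreq_cpow (ha : 5 / 2 ≤ a) (hl : 0 < l) {D : ℝ} (hD : 0 < D) :
    ∫ β : ℝ, cexp (2 * π * I * (β * D : ℝ)) * (cfreq l β)⁻¹ ^ (a : ℂ) =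
      ((D ^ (a - 1) * Real.exp (-l * D) / Real.Gamma a : ℝ) : ℂ) := by
  have ha0 : 0 < a := by linarith
  have hΓ : (Real.Gamma a : ℂ) ≠ 0 := by exact_mod_cast (Real.Gamma_pos_of_pos ha0).ne'
  have hinv := (integrable_gammaKernel ha0 hl).fourierInv_fourier_eq
    (by rw [fourier_gammaKernel ha0 hl]; exact (integrable_inv_cfreq_cpow ha hl).mul_const _)
    (continuousAt_gammaKernel hD)
  rw [fourier_gammaKernel ha0 hl, Real.fourierInv_eq', gammaKernel,
    Set.indicator_of_mem (Set.mem_Ioi.2 hD)] at hinv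
  rw [ofReal_div, eq_div_iff hΓ, ← hinv, ← integral_mul_const]
  refine integral_congr_ae (Eventually.of_forall fun β => ?_)
  simp only [smul_eq_mul, mul_assoc, RCLike.inner_apply, conj_trivial]
  congr 2
  push_cast
  ring

end FourierInversion

/-! ### Diagonal quadratic polynomials and their generating functions -/

section DiagonalPolynomial

variable {ι : Type*} [Fintype ι] (A : ι → ℕ) (b : ι → ℤ) (N : ℤ)

/-- The value at `u` of the diagonal quadratic polynomial `∑ᵢ (Aᵢ uᵢ² + bᵢ uᵢ) + N`. -/
def diagEval (u : ι → ℤ) : ℤ := ∑ i, (A i * u i ^ 2 + b i * u i) + N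

/-- The integral zeros of the diagonal quadratic polynomial `∑ᵢ (Aᵢ uᵢ² + bᵢ uᵢ) + N`. -/
def diagZeros : Set (ι → ℤ) := {u | diagEval A b N u = 0}

/-- Minus the minimum over `ℝ` of the diagonal polynomial `∑ᵢ (Aᵢ uᵢ² + bᵢ uᵢ) + N`. -/
noncomputable def diagDepth : ℝ := ∑ i, ((b i : ℝ) ^ 2 / (4 * A i)) - N

variable {A b N}

lemma sum_mul_sq_eq_diagDepth_add (hA : ∀ i, 0 < A i) (u : ι → ℤ) :
    ∑ i, (A i : ℝ) * (u i + b i / (2 * A i)) ^ 2 = diagDepth A b N + diagEval A b N u := by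
  have hsq (i : ι) : (A i : ℝ) * (u i + b i / (2 * A i)) ^ 2 =
      (b i : ℝ) ^ 2 / (4 * A i) + (A i * u i ^ 2 + b i * u i) := by
    have : (A i : ℝ) ≠ 0 := by exact_mod_cast (hA i).ne'
    field_simp
    ring
  simp_rw [hsq]
  rw [sum_add_distrib, diagDepth, diagEval]
  push_cast
  ring

lemma sq_add_div_le_diagDepth (hA : ∀ i, 0 < A i) {u : ι → ℤ} (hu : u ∈ diagZeros A b N) (i : ι) :
    ((u i : ℝ) + b i / (2 * A i)) ^ 2 ≤ diagDepth A b N := by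
  have hsum := sum_mul_sq_eq_diagDepth_add (b := b) (N := N) hA u
  rw [show diagEval A b N u = 0 from hu, Int.cast_zero, add_zero] at hsum
  have hA1 : (1 : ℝ) ≤ A i := by exact_mod_cast hA i
  calc ((u i : ℝ) + b i / (2 * A i)) ^ 2
      ≤ (A i : ℝ) * (u i + b i / (2 * A i)) ^ 2 := le_mul_of_one_le_left (sq_nonneg _) hA1
    _ ≤ ∑ j, (A j : ℝ) * (u j + b j / (2 * A j)) ^ 2 :=
      single_le_sum (f := fun j => (A j : ℝ) * (u j + b j / (2 * A j)) ^ 2)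
        (fun j _ => by positivity) (mem_univ i)
    _ = diagDepth A b N := hsum

lemma finite_diagZeros (hA : ∀ i, 0 < A i) : (diagZeros A b N).Finite := by
  set D := √(diagDepth A b N)
  refine (Set.Finite.pi (t := fun i => Set.Icc ⌊-(b i / (2 * A i) : ℝ) - D⌋
    ⌈-(b i / (2 * A i) : ℝ) + D⌉) fun i => Set.finite_Icc _ _).subset fun u hu i _ => ?_
  have habs := abs_le.1 (Real.abs_le_sqrt (sq_add_div_le_diagDepth hA hu i))
  exact ⟨Int.floor_le_iff.2 (by linarith), Int.le_ceil_iff.2 (by linarith)⟩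

end DiagonalPolynomial

section ThetaProduct

lemma thetaTerm_eq (A : ℕ) (b : ℤ) (l α : ℝ) (n : ℤ) :
    thetaTerm A b l α n = (Real.exp (-l * (A * (n + b / (2 * A)) ^ 2)) : ℂ) *
      cexp (2 * π * I * ((-(α * (A * n ^ 2 + b * n)) : ℝ) : ℂ)) := by
  rw [thetaTerm, Complex.ofReal_exp, ← Complex.exp_add]
  congr 1
  push_cast
  ring

lemma norm_thetaTerm (A : ℕ) (b : ℤ) (l α : ℝ) (n : ℤ) :
    ‖thetaTerm A b l α n‖ = ‖thetaTerm A b l 0 n‖ := by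
  rw [thetaTerm_eq, thetaTerm_eq, norm_mul, norm_mul, norm_cexp_phase, norm_cexp_phase]

lemma continuous_thetaTerm (A : ℕ) (b : ℤ) (l : ℝ) (n : ℤ) :
    Continuous fun α => thetaTerm A b l α n := by
  unfold thetaTerm
  fun_prop

lemma continuous_thetaSeries {A : ℕ} (hA : 0 < A) (b : ℤ) {l : ℝ} (hl : 0 < l) :
    Continuous (thetaSeries A b l) :=
  continuous_tsum (continuous_thetaTerm A b l) (summable_thetaTerm b 0 hA hl).norm
    fun n α => (norm_thetaTerm A b l α n).le

lemma integral_cexp_neg_mul_intCast (x : ℝ) (m : ℤ) :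
    ∫ α in x..(x + 1), cexp (2 * π * I * ((-(α * m) : ℝ) : ℂ)) = if m = 0 then 1 else 0 := by
  have hlin (α : ℝ) : 2 * π * I * ((-(α * m) : ℝ) : ℂ) = -2 * π * I * m * α := by
    push_cast
    ring
  simp_rw [hlin]
  split_ifs with h
  · simp [h]
  · have hc : (-2 * π * I * m : ℂ) ≠ 0 := by simp [h, Real.pi_ne_zero]
    have hperiod : cexp (-2 * π * I * m * ((x + 1 : ℝ) : ℂ)) = cexp (-2 * π * I * m * x) := by
      refine Complex.exp_eq_exp_iff_exists_int.2 ⟨-m, ?_⟩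
      push_cast
      ring
    rw [integral_exp_mul_complex hc, hperiod, sub_self, zero_div]

variable {ι : Type*} [Fintype ι] (A : ι → ℕ) (b : ι → ℤ) (N : ℤ) {l : ℝ}

/-- The generating function `e(-α N) ∏ᵢ thetaSeries (Aᵢ) (bᵢ) l α`, whose `0`-th Fourier coefficient
counts the zeros of the diagonal polynomial. -/
noncomputable def thetaProd (l α : ℝ) : ℂ :=
  cexp (2 * π * I * ((-(α * N) : ℝ) : ℂ)) * ∏ i, thetaSeries (A i) (b i) l α

variable {A} (hA : ∀ i, 0 < A i)
include hA

lemma continuous_thetaProd (hl : 0 < l) : Continuous (thetaProd A b N l) :=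
  .mul (by fun_prop) (continuous_finsetProd _ fun i _ => continuous_thetaSeries (hA i) _ hl)

lemma cexp_mul_prod_thetaTerm (l α : ℝ) (u : ι → ℤ) :
    cexp (2 * π * I * ((-(α * N) : ℝ) : ℂ)) * ∏ i, thetaTerm (A i) (b i) l α (u i) =
      (Real.exp (-l * (diagDepth A b N + diagEval A b N u)) : ℂ) *
        cexp (2 * π * I * ((-(α * diagEval A b N u) : ℝ) : ℂ)) := by
  simp_rw [thetaTerm_eq]
  rw [prod_mul_distrib, ← Complex.ofReal_prod, ← Real.exp_sum, ← mul_sum,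
    sum_mul_sq_eq_diagDepth_add hA, ← Complex.exp_sum, mul_left_comm, ← Complex.exp_add]
  congr 2
  rw [diagEval, ← mul_sum, ← Complex.ofReal_sum, sum_neg_distrib, ← mul_sum]
  push_cast
  ring

lemma integral_cexp_mul_prod_thetaTerm (x : ℝ) (u : ι → ℤ) :
    ∫ α in x..(x + 1),
        cexp (2 * π * I * ((-(α * N) : ℝ) : ℂ)) * ∏ i, thetaTerm (A i) (b i) l α (u i) =
      (diagZeros A b N).indicator (fun _ => (Real.exp (-l * diagDepth A b N) : ℂ)) u := by
  simp_rw [cexp_mul_prod_thetaTerm b N hA]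
  rw [intervalIntegral.integral_const_mul, integral_cexp_neg_mul_intCast]
  by_cases h : diagEval A b N u = 0
  · rw [if_pos h, mul_one, Set.indicator_of_mem (by exact h), h, Int.cast_zero, add_zero]
  · rw [if_neg h, mul_zero, Set.indicator_of_notMem (by exact h)]

lemma norm_integral_prod_sum_thetaTerm_le (x : ℝ) (t : Finset ℤ) :
    ‖∫ α in x..(x + 1), cexp (2 * π * I * ((-(α * N) : ℝ) : ℂ)) *
        ∏ i, ∑ n ∈ t, thetaTerm (A i) (b i) l α n‖ ≤
      Real.exp (-l * diagDepth A b N) * (diagZeros A b N).ncard := by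
  classical
  have hcont (u : ι → ℤ) : Continuous fun α : ℝ =>
      cexp (2 * π * I * ((-(α * N) : ℝ) : ℂ)) * ∏ i, thetaTerm (A i) (b i) l α (u i) :=
    .mul (by fun_prop) (continuous_finsetProd _ fun i _ => continuous_thetaTerm _ _ _ _)
  simp_rw [prod_univ_sum, mul_sum]
  rw [intervalIntegral.integral_finsetSum fun u _ => (hcont u).intervalIntegrable _ _]
  simp_rw [integral_cexp_mul_prod_thetaTerm b N hA]
  refine (norm_sum_le _ _).trans ?_
  simp_rw [Set.indicator_apply, apply_ite norm, Complex.norm_real, norm_zero,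
    Real.norm_of_nonneg (Real.exp_nonneg _)]
  rw [← sum_filter, sum_const, nsmul_eq_mul, mul_comm]
  gcongr
  rw [← Set.ncard_coe_finset]
  exact Set.ncard_le_ncard (fun u hu => (mem_filter.1 hu).2) (finite_diagZeros hA)

lemma norm_integral_thetaProd_le (x : ℝ) (hl : 0 < l) :
    ‖∫ α in x..(x + 1), thetaProd A b N l α‖ ≤
      Real.exp (-l * diagDepth A b N) * (diagZeros A b N).ncard := by
  have hsum (i : ι) (α : ℝ) := summable_thetaTerm (b i) α (hA i) hl
  have hlim : Tendsto (fun t : Finset ℤ => ∫ α in x..(x + 1),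
      cexp (2 * π * I * ((-(α * N) : ℝ) : ℂ)) * ∏ i, ∑ n ∈ t, thetaTerm (A i) (b i) l α n) atTop
      (𝓝 (∫ α in x..(x + 1), thetaProd A b N l α)) := by
    refine intervalIntegral.tendsto_integral_filter_of_dominated_convergence
      (fun _ => ∏ i, ∑' n, ‖thetaTerm (A i) (b i) l 0 n‖) (.of_forall fun t => ?_)
      (.of_forall fun t => .of_forall fun α _ => ?_) intervalIntegrable_const
      (.of_forall fun α _ => ?_)
    · exact (Continuous.mul (by fun_prop) (continuous_finsetProd _ fun i _ =>
        continuous_finsetSum _ fun n _ => continuous_thetaTerm _ _ _ _)).aestronglyMeasurable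
    · rw [norm_mul, norm_cexp_phase, one_mul, norm_prod]
      refine prod_le_prod (fun _ _ => norm_nonneg _) fun i _ => (norm_sum_le _ _).trans ?_
      simp_rw [norm_thetaTerm _ _ _ α]
      exact (hsum i 0).norm.sum_le_tsum _ fun _ _ => norm_nonneg _
    · exact Tendsto.const_mul _ (tendsto_finsetProd _ fun i _ => (hsum i α).hasSum)
  exact le_of_tendsto hlim.norm
    (.of_forall fun t => norm_integral_prod_sum_thetaTerm_le b N hA x t)

end ThetaProduct

/-! ### The model on a single arc -/

section MajorArcModel

lemma norm_prod_sub_prod_le {ι R : Type*} [NormedCommRing R] [NormOneClass R] (s : Finset ι)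
    {f g : ι → R} {m d : ι → ℝ} (hg : ∀ i, ‖g i‖ ≤ m i) (hfg : ∀ i, ‖f i - g i‖ ≤ d i) :
    ‖∏ i ∈ s, f i - ∏ i ∈ s, g i‖ ≤ ∏ i ∈ s, (m i + d i) - ∏ i ∈ s, m i := by
  classical
  have hm (i : ι) : 0 ≤ m i := (norm_nonneg _).trans (hg i)
  have hf (i : ι) : ‖f i‖ ≤ m i + d i :=
    (norm_le_norm_add_norm_sub' _ _).trans (add_le_add (hg i) (hfg i))
  induction s using Finset.induction_on with
  | empty => simp
  | insert i s hi ih =>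
    rw [prod_insert hi, prod_insert hi, prod_insert hi, prod_insert hi]
    calc ‖f i * ∏ j ∈ s, f j - g i * ∏ j ∈ s, g j‖
        = ‖(f i - g i) * ∏ j ∈ s, f j + g i * (∏ j ∈ s, f j - ∏ j ∈ s, g j)‖ := by
          congr 1
          ring
      _ ≤ ‖f i - g i‖ * ‖∏ j ∈ s, f j‖ + ‖g i‖ * ‖∏ j ∈ s, f j - ∏ j ∈ s, g j‖ :=
          (norm_add_le _ _).trans (add_le_add (norm_mul_le _ _) (norm_mul_le _ _))
      _ ≤ d i * ∏ j ∈ s, (m j + d j) +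
            m i * (∏ j ∈ s, (m j + d j) - ∏ j ∈ s, m j) := by
          gcongr
          · exact (norm_nonneg _).trans (hfg i)
          · exact hfg i
          · exact (Finset.norm_prod_le _ _).trans
              (prod_le_prod (fun _ _ => norm_nonneg _) fun j _ => hf j)
          · exact hm i
          · exact hg i
      _ = (m i + d i) * ∏ j ∈ s, (m j + d j) - m i * ∏ j ∈ s, m j := by ring

lemma sqrt_div_pow {c x : ℝ} (hc : 0 ≤ c) (hx : 0 ≤ x) (n : ℕ) :
    √(c / x) ^ n = √c ^ n * x ^ (-(n / 2 : ℝ)) := by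
  have hpow : √x ^ n = x ^ (n / 2 : ℝ) := by
    rw [Real.sqrt_eq_rpow, ← Real.rpow_natCast, ← Real.rpow_mul hx, one_div_mul_eq_div]
  rw [Real.sqrt_div hc, div_pow, hpow, Real.rpow_neg hx, div_eq_mul_inv]

lemma norm_localTerm_le {A q : ℕ} [NeZero q] (b a : ℤ) {l : ℝ} (β : ℝ) (hA : 0 < A) (hl : 0 < l)
    (ha : IsUnit (a : ZMod q)) :
    ‖localTerm A q b a l β‖ ≤ √(2 * π / (‖cfreq l β‖ * q)) := by
  rw [norm_localTerm, ← sqrt_pi_div_mul_sqrt_div hA (NeZero.pos q) (norm_cfreq_pos β hl)]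
  gcongr
  exact norm_quadGaussSum_le ha hA _

lemma norm_localTerm_le_of_coprime {A q : ℕ} [NeZero q] (b a : ℤ) {l : ℝ} (β : ℝ)
    (ha : IsUnit (a : ZMod q)) (hA : q.Coprime (2 * A)) :
    ‖localTerm A q b a l β‖ ≤ √(π / A) * √(1 / (‖cfreq l β‖ * q)) := by
  have hq : √(1 / (‖cfreq l β‖ * q)) = √(1 / ‖cfreq l β‖) * (√q / q) := by
    rw [← one_div_mul_one_div, Real.sqrt_mul (by positivity), Real.sqrt_div_self,
      one_div (q : ℝ), Real.sqrt_inv]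
  rw [norm_localTerm, hq, ← mul_assoc]
  gcongr
  exact norm_quadGaussSum_le_of_coprime ha hA _

lemma localTerm_eq_zero {A q : ℕ} [NeZero q] {a b : ℤ} (l β : ℝ) (ha : IsUnit (a : ZMod q))
    (hb : IsCoprime b A) (hq : ¬ q.Coprime A) : localTerm A q b a l β = 0 := by
  obtain ⟨p, hp, hpq, hpA⟩ := Nat.Prime.not_coprime_iff_dvd.1 hq
  have hpb : ¬ (p : ℤ) ∣ b := fun hpb => (Nat.prime_iff_prime_int.1 hp).not_isUnit
    (hb.isUnit_of_dvd' hpb (Int.natCast_dvd_natCast.2 hpA))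
  rw [localTerm, quadGaussSum_eq_zero_of_prime_dvd ha hpq hpA hpb, zero_div, mul_zero]

lemma localTerm_one (A : ℕ) (b : ℤ) (l β : ℝ) : localTerm A 1 b 0 l β =
    vertexPhase A b β * ((√(π / A) : ℝ) * (cfreq l β)⁻¹ ^ (1 / 2 : ℂ)) := by
  simp [localTerm, quadGaussSum]

variable {ι : Type*} [Fintype ι]

/-- The model `e(-αN) ∏ᵢ localTerm` for `thetaProd A b N l α` at `α = β - a / q`. -/
noncomputable def majorTerm (A : ι → ℕ) (b : ι → ℤ) (N : ℤ) (q : ℕ) [NeZero q] (a : ℤ) (l β : ℝ) :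
    ℂ :=
  cexp (2 * π * I * ((-((β - a / q) * N) : ℝ) : ℂ)) * ∏ i, localTerm (A i) q (b i) a l β

/-- The volume factor `∏ᵢ √(π / Aᵢ)` of the singular integral. -/
noncomputable def volumeFactor (A : ι → ℕ) : ℝ := ∏ i, √(π / A i)

/-- `A i₀` is divisible by all primes up to `P` and by all primes dividing `2 ∏ᵢ Aᵢ`. Together with
`b i₀` being coprime to `A i₀`, this makes all local terms with `1 < q ≤ P` vanish. -/
def AbsorbsPrimes (P : ℕ) (A : ι → ℕ) (i₀ : ι) : Prop :=
  ∀ p : ℕ, p.Prime → (p ≤ P ∨ p ∣ 2 * ∏ i, A i) → p ∣ A i₀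

lemma AbsorbsPrimes.coprime_two_mul {P q : ℕ} {A : ι → ℕ} {i₀ : ι} (hP : AbsorbsPrimes P A i₀)
    (hq : q.Coprime (A i₀)) (i : ι) : q.Coprime (2 * A i) :=
  Nat.coprime_of_dvd fun p hp hpq hpA => hp.not_dvd_one <|
    hq ▸ Nat.dvd_gcd hpq (hP p hp (.inr (hpA.trans
      (Nat.mul_dvd_mul_left 2 (dvd_prod_of_mem A (mem_univ i))))))

lemma AbsorbsPrimes.lt_of_coprime {P q : ℕ} [NeZero q] {A : ι → ℕ} {i₀ : ι}
    (hP : AbsorbsPrimes P A i₀) (hq1 : q ≠ 1) (hq : q.Coprime (A i₀)) : P < q := by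
  by_contra! hle
  have hp := Nat.minFac_prime hq1
  exact hp.not_dvd_one (hq ▸ Nat.dvd_gcd q.minFac_dvd
    (hP _ hp (.inl ((Nat.minFac_le (NeZero.pos q)).trans hle))))

variable {A : ι → ℕ} (b : ι → ℤ) (N : ℤ) {q : ℕ} [NeZero q] (a : ℤ) {l : ℝ} (β : ℝ)

lemma norm_majorTerm : ‖majorTerm A b N q a l β‖ = ∏ i, ‖localTerm (A i) q (b i) a l β‖ := by
  rw [majorTerm, norm_mul, norm_cexp_phase, one_mul, norm_prod]

lemma norm_majorTerm_le (hA : ∀ i, 0 < A i) (hl : 0 < l) (ha : IsUnit (a : ZMod q)) :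
    ‖majorTerm A b N q a l β‖ ≤ √(2 * π) ^ Fintype.card ι *
      (‖cfreq l β‖ * q) ^ (-(Fintype.card ι / 2 : ℝ)) := by
  rw [norm_majorTerm, ← sqrt_div_pow (by positivity) (by positivity), ← card_univ, ← prod_const]
  exact prod_le_prod (fun _ _ => norm_nonneg _) fun i _ => norm_localTerm_le _ _ _ (hA i) hl ha

lemma norm_majorTerm_le_of_coprime (ha : IsUnit (a : ZMod q)) (hA : ∀ i, q.Coprime (2 * A i)) :
    ‖majorTerm A b N q a l β‖ ≤
      volumeFactor A * (‖cfreq l β‖ * q) ^ (-(Fintype.card ι / 2 : ℝ)) := by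
  calc ‖majorTerm A b N q a l β‖
      ≤ ∏ i, √(π / A i) * √(1 / (‖cfreq l β‖ * q)) := by
        rw [norm_majorTerm]
        exact prod_le_prod (fun _ _ => norm_nonneg _) fun i _ =>
          norm_localTerm_le_of_coprime _ _ _ ha (hA i)
    _ = volumeFactor A * (‖cfreq l β‖ * q) ^ (-(Fintype.card ι / 2 : ℝ)) := by
        rw [prod_mul_distrib, prod_const, card_univ, sqrt_div_pow zero_le_one (by positivity),
          Real.sqrt_one, one_pow, one_mul, volumeFactor]

variable {b} in
lemma norm_majorTerm_le_of_absorbsPrimes {P : ℕ} {i₀ : ι} (hP : AbsorbsPrimes P A i₀)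
    (hb : IsCoprime (b i₀) (A i₀)) (hq1 : q ≠ 1) (ha : IsUnit (a : ZMod q)) :
    ‖majorTerm A b N q a l β‖ ≤ (if P < q then volumeFactor A else 0) *
      (‖cfreq l β‖ * q) ^ (-(Fintype.card ι / 2 : ℝ)) := by
  by_cases hq : q.Coprime (A i₀)
  · rw [if_pos (hP.lt_of_coprime hq1 hq)]
    exact norm_majorTerm_le_of_coprime b N a β ha (hP.coprime_two_mul hq)
  · rw [majorTerm, prod_eq_zero (mem_univ i₀) (localTerm_eq_zero l β ha hb hq), mul_zero, norm_zero]
    have : 0 ≤ volumeFactor A := prod_nonneg fun _ _ => Real.sqrt_nonneg _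
    positivity

lemma majorTerm_one : majorTerm A b N 1 0 l β =
    volumeFactor A * (cexp (2 * π * I * (β * diagDepth A b N : ℝ)) *
      (cfreq l β)⁻¹ ^ ((Fintype.card ι / 2 : ℝ) : ℂ)) := by
  have hphase : 2 * π * I * (β * diagDepth A b N : ℝ) =
      2 * π * I * ((-(β * N) : ℝ) : ℂ) +
        ∑ i, 2 * π * I * ((β * (b i ^ 2 / (4 * A i)) : ℝ) : ℂ) := by
    rw [← mul_sum, ← Complex.ofReal_sum, ← mul_sum, diagDepth]
    push_cast
    ring
  have hpow : (cfreq l β)⁻¹ ^ ((Fintype.card ι / 2 : ℝ) : ℂ) =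
      ((cfreq l β)⁻¹ ^ (1 / 2 : ℂ)) ^ Fintype.card ι := by
    rw [← Complex.cpow_nat_mul]
    push_cast
    rw [mul_one_div]
  rw [majorTerm, hphase, hpow, Complex.exp_add, Complex.exp_sum, volumeFactor, Complex.ofReal_prod]
  simp_rw [localTerm_one, vertexPhase]
  rw [prod_mul_distrib, prod_mul_distrib, prod_const, card_univ, Int.cast_zero, zero_div, sub_zero]
  ring

lemma norm_thetaProd_sub_majorTerm_le (hA : ∀ i, 0 < A i) (hl : 0 < l) (ha : IsUnit (a : ZMod q))
    {δ : ℝ} (hδ : ‖cfreq l β‖ ^ 2 * q ^ 2 / l ≤ δ) :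
    ‖thetaProd A b N l (β - a / q) - majorTerm A b N q a l β‖ ≤
      √(2 * π) ^ Fintype.card ι * (∏ i, (1 + A i * δ) - 1) *
        (‖cfreq l β‖ * q) ^ (-(Fintype.card ι / 2 : ℝ)) := by
  set X := √(2 * π / (‖cfreq l β‖ * q)) with hX
  have hterm (i : ι) : ‖thetaSeries (A i) (b i) l (β - a / q) - localTerm (A i) q (b i) a l β‖ ≤
      X * (A i * δ) := by
    refine (norm_thetaSeries_sub_localTerm_le _ _ β (hA i) hl ha).trans ?_
    gcongr
    calc ‖cfreq l β‖ ^ 2 * A i * q ^ 2 / l = A i * (‖cfreq l β‖ ^ 2 * q ^ 2 / l) := by ring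
      _ ≤ A i * δ := by gcongr
  calc ‖thetaProd A b N l (β - a / q) - majorTerm A b N q a l β‖
      = ‖∏ i, thetaSeries (A i) (b i) l (β - a / q) - ∏ i, localTerm (A i) q (b i) a l β‖ := by
        rw [thetaProd, majorTerm, ← mul_sub, norm_mul, norm_cexp_phase, one_mul]
    _ ≤ ∏ i, (X + X * (A i * δ)) - ∏ _i : ι, X :=
        norm_prod_sub_prod_le _ (fun i => norm_localTerm_le _ _ _ (hA i) hl ha) hterm
    _ = X ^ Fintype.card ι * (∏ i, (1 + A i * δ) - 1) := by
        simp_rw [← mul_one_add]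
        rw [prod_mul_distrib, prod_const, card_univ]
        ring
    _ = _ := by
        rw [hX, sqrt_div_pow (by positivity) (by positivity)]
        ring

lemma norm_thetaProd_le (hA : ∀ i, 0 < A i) (hl : 0 < l) (ha : IsUnit (a : ZMod q))
    {δ : ℝ} (hδ : ‖cfreq l β‖ ^ 2 * q ^ 2 / l ≤ δ) :
    ‖thetaProd A b N l (β - a / q)‖ ≤ √(2 * π) ^ Fintype.card ι * (∏ i, (1 + A i * δ)) *
      (‖cfreq l β‖ * q) ^ (-(Fintype.card ι / 2 : ℝ)) := by
  linarith [norm_le_norm_add_norm_sub' (thetaProd A b N l (β - a / q)) (majorTerm A b N q a l β),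
    norm_thetaProd_sub_majorTerm_le b N a β hA hl ha hδ, norm_majorTerm_le b N a β hA hl ha]

end MajorArcModel

/-! ### Dirichlet arcs -/

section ArcKernel

variable {a l : ℝ}

/-- The integrable majorant `l ^ (2 - a) / (l² + β²)` of `‖cfreq l β‖ ^ (-a)` for `5 / 2 ≤ a`. -/
noncomputable def arcKernel (a l β : ℝ) : ℝ := l ^ (2 - a) * (1 / (l ^ 2 + β ^ 2))

lemma arcKernel_nonneg (a : ℝ) (hl : 0 < l) (β : ℝ) : 0 ≤ arcKernel a l β := by
  unfold arcKernel
  positivity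

lemma integrable_arcKernel (a : ℝ) (hl : 0 < l) : Integrable (arcKernel a l) :=
  (integrable_one_div_sq_add_sq hl).const_mul _

lemma integral_arcKernel (a : ℝ) (hl : 0 < l) : ∫ β, arcKernel a l β = π * l ^ (1 - a) := by
  have hpow : l ^ (2 - a) = l ^ (1 - a) * l := by
    rw [← Real.rpow_add_one hl.ne']
    congr 1
    ring
  unfold arcKernel
  rw [integral_const_mul, integral_one_div_sq_add_sq hl, hpow]
  field_simp

lemma cfreq_mul_rpow_neg_le (ha : 5 / 2 ≤ a) (hl : 0 < l) {q : ℕ} (hq : 0 < q) {v β : ℝ}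
    (hv : 0 < v) (hvw : v * l ≤ ‖cfreq l β‖) :
    (‖cfreq l β‖ * q) ^ (-a) ≤
      v ^ (-(1 / 2) : ℝ) * ((q : ℝ) ^ (-(5 / 2) : ℝ) * arcKernel a l β) := by
  have hsplit : l ^ (-(a - 5 / 2)) * (v * l) ^ (-(1 / 2) : ℝ) =
      v ^ (-(1 / 2) : ℝ) * l ^ (2 - a) := by
    rw [Real.mul_rpow hv.le hl.le, mul_left_comm, ← Real.rpow_add hl]
    congr 2
    ring
  calc (‖cfreq l β‖ * q) ^ (-a) = ‖cfreq l β‖ ^ (-a) * (q : ℝ) ^ (-a) :=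
        Real.mul_rpow (norm_nonneg _) (Nat.cast_nonneg q)
    _ ≤ (v ^ (-(1 / 2) : ℝ) * l ^ (2 - a) * (1 / (l ^ 2 + β ^ 2))) *
          (q : ℝ) ^ (-(5 / 2) : ℝ) := by
        rw [← hsplit]
        gcongr ?_ * ?_
        · exact norm_cfreq_rpow_neg_le ha hl (by positivity) hvw
        · exact Real.rpow_le_rpow_of_exponent_le (by exact_mod_cast hq) (by linarith)
    _ = v ^ (-(1 / 2) : ℝ) * ((q : ℝ) ^ (-(5 / 2) : ℝ) * arcKernel a l β) := by
        rw [arcKernel]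
        ring

/-- The sum of the kernels centred at the rationals `k / q` with `q ≤ n` and `|k| ≤ q`, weighted by
`c q * q ^ (-5 / 2)`. -/
noncomputable def rationalKernel (c : ℕ → ℝ) (a l : ℝ) (n : ℕ) (α : ℝ) : ℝ :=
  ∑ q ∈ Icc 1 n, ∑ k ∈ Icc (-(q : ℤ)) q,
    c q * ((q : ℝ) ^ (-(5 / 2) : ℝ) * arcKernel a l (α - k / q))

variable {c : ℕ → ℝ} (hc : ∀ q, 0 ≤ c q) (hl : 0 < l)
include hc hl

lemma mul_arcKernel_nonneg (a : ℝ) (q : ℕ) (β : ℝ) :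
    0 ≤ c q * ((q : ℝ) ^ (-(5 / 2) : ℝ) * arcKernel a l β) :=
  mul_nonneg (hc q) (mul_nonneg (by positivity) (arcKernel_nonneg a hl β))

lemma le_rationalKernel (a α : ℝ) {n q : ℕ} {k : ℤ} (hq : q ∈ Icc 1 n) (hk : k ∈ Icc (-(q : ℤ)) q) :
    c q * ((q : ℝ) ^ (-(5 / 2) : ℝ) * arcKernel a l (α - k / q)) ≤ rationalKernel c a l n α := by
  refine le_trans ?_ (single_le_sum (f := fun q : ℕ => ∑ k ∈ Icc (-(q : ℤ)) q,
    c q * ((q : ℝ) ^ (-(5 / 2) : ℝ) * arcKernel a l (α - k / q)))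
    (fun q _ => sum_nonneg fun k _ => mul_arcKernel_nonneg hc hl a q _) hq)
  exact single_le_sum (f := fun k : ℤ =>
    c q * ((q : ℝ) ^ (-(5 / 2) : ℝ) * arcKernel a l (α - k / q)))
    (fun k _ => mul_arcKernel_nonneg hc hl a q _) hk

omit hc in
lemma integrable_rationalKernel (c : ℕ → ℝ) (a : ℝ) (n : ℕ) :
    Integrable (rationalKernel c a l n) :=
  integrable_finsetSum _ fun _ _ => integrable_finsetSum _ fun _ _ =>
    (((integrable_arcKernel a hl).comp_sub_right _).const_mul _).const_mul _

omit hc in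
lemma integral_rationalKernel (c : ℕ → ℝ) (a : ℝ) (n : ℕ) :
    ∫ α, rationalKernel c a l n α =
      π * l ^ (1 - a) * ∑ q ∈ Icc 1 n, (2 * q + 1) * (c q * (q : ℝ) ^ (-(5 / 2) : ℝ)) := by
  have hint (x y z : ℝ) : Integrable fun α => y * (z * arcKernel a l (α - x)) :=
    (((integrable_arcKernel a hl).comp_sub_right x).const_mul _).const_mul _
  unfold rationalKernel
  rw [integral_finsetSum _ fun q _ => integrable_finsetSum _ fun k _ => hint _ _ _, mul_sum]
  refine sum_congr rfl fun q _ => ?_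
  have hcard : ((Icc (-(q : ℤ)) q).card : ℝ) = 2 * q + 1 := by
    rw [Int.card_Icc, show ((q : ℤ) + 1 - -q).toNat = 2 * q + 1 by omega]
    push_cast
    ring
  rw [integral_finsetSum _ fun k _ => hint _ _ _]
  simp_rw [integral_const_mul, integral_sub_right_eq_self (arcKernel a l), integral_arcKernel a hl]
  rw [sum_const, nsmul_eq_mul, hcard]
  ring

lemma setIntegral_rationalKernel_le (a : ℝ) (n : ℕ) (s : Set ℝ) :
    ∫ α in s, rationalKernel c a l n α ≤
      3 * π * l ^ (1 - a) * ∑ q ∈ Icc 1 n, c q * (q : ℝ) ^ (-(3 / 2) : ℝ) := by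
  have hnonneg (α : ℝ) : 0 ≤ rationalKernel c a l n α :=
    sum_nonneg fun q _ => sum_nonneg fun k _ => mul_arcKernel_nonneg hc hl a q _
  refine (setIntegral_le_integral (integrable_rationalKernel hl c a n)
    (.of_forall hnonneg)).trans ?_
  have hterm (q : ℕ) (hq : q ∈ Icc 1 n) : (2 * q + 1) * (c q * (q : ℝ) ^ (-(5 / 2) : ℝ)) ≤
      3 * (c q * (q : ℝ) ^ (-(3 / 2) : ℝ)) := by
    have hq1 : (1 : ℝ) ≤ q := by exact_mod_cast (mem_Icc.1 hq).1
    have hpow : (q : ℝ) ^ (-(3 / 2) : ℝ) = q * (q : ℝ) ^ (-(5 / 2) : ℝ) := by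
      rw [← Real.rpow_one_add' (by positivity) (by norm_num)]
      norm_num
    have hcq := hc q
    calc (2 * q + 1) * (c q * (q : ℝ) ^ (-(5 / 2) : ℝ))
        ≤ 3 * q * (c q * (q : ℝ) ^ (-(5 / 2) : ℝ)) := by
          gcongr
          linarith
      _ = 3 * (c q * (q : ℝ) ^ (-(3 / 2) : ℝ)) := by
          rw [hpow]
          ring
  rw [integral_rationalKernel hl]
  refine (mul_le_mul_of_nonneg_left (sum_le_sum hterm) (by positivity)).trans_eq ?_
  rw [← mul_sum]
  ring

end ArcKernel

section Arcs

lemma sq_norm_cfreq_mul_sq_div_le_of_abs_le {l : ℝ} (hl : 0 < l) {W q β : ℝ} (hq : 0 ≤ q)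
    (hqW : q ≤ W) (hβ : |β| ≤ W * l) :
    ‖cfreq l β‖ ^ 2 * q ^ 2 / l ≤ (1 + 4 * π ^ 2 * W ^ 2) * W ^ 2 * l := by
  rw [div_le_iff₀ hl, sq_norm_cfreq]
  calc (l ^ 2 + (2 * π * β) ^ 2) * q ^ 2 = (l ^ 2 + 4 * π ^ 2 * |β| ^ 2) * q ^ 2 := by
        rw [sq_abs]
        ring
    _ ≤ (l ^ 2 + 4 * π ^ 2 * (W * l) ^ 2) * W ^ 2 := by gcongr
    _ = (1 + 4 * π ^ 2 * W ^ 2) * W ^ 2 * l * l := by ring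

lemma sq_norm_cfreq_mul_sq_div_le {l : ℝ} (hl : 0 < l) {n q β : ℝ} (hq : 0 ≤ q) (hqn : q ≤ n)
    (hn : n ^ 2 * l ≤ 1) (hn' : 1 ≤ (n + 1) ^ 2 * l) (hβ : |β| * ((n + 1) * q) ≤ 1) :
    ‖cfreq l β‖ ^ 2 * q ^ 2 / l ≤ 41 := by
  have hn0 : 0 ≤ n := hq.trans hqn
  have hq2 : q ^ 2 * l ≤ 1 := le_trans (by gcongr) hn
  have hβq : β ^ 2 * q ^ 2 ≤ l := by
    have hsq : (|β| * ((n + 1) * q)) ^ 2 ≤ 1 := pow_le_one₀ (by positivity) hβ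
    rw [mul_pow, sq_abs] at hsq
    calc β ^ 2 * q ^ 2 = β ^ 2 * q ^ 2 * 1 := (mul_one _).symm
      _ ≤ β ^ 2 * q ^ 2 * ((n + 1) ^ 2 * l) := by gcongr
      _ = β ^ 2 * ((n + 1) * q) ^ 2 * l := by ring
      _ ≤ 1 * l := by gcongr
      _ = l := one_mul l
  have hπ : π ^ 2 ≤ 10 := by nlinarith only [Real.pi_lt_d2, Real.pi_gt_three]
  rw [div_le_iff₀ hl, sq_norm_cfreq]
  calc (l ^ 2 + (2 * π * β) ^ 2) * q ^ 2 = q ^ 2 * l * l + 4 * π ^ 2 * (β ^ 2 * q ^ 2) := by ring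
    _ ≤ 1 * l + 4 * 10 * l := by gcongr
    _ = 41 * l := by ring

lemma exists_abs_sub_div_mul_le_one {α : ℝ} (hα : |α| ≤ 1 / 2) {n : ℕ} (hn : 0 < n) :
    ∃ q ∈ Icc 1 n, ∃ k ∈ Icc (-(q : ℤ)) q, IsUnit ((-k : ℤ) : ZMod q) ∧
      |α - k / q| * ((n + 1) * q) ≤ 1 := by
  obtain ⟨x, hx, hxn⟩ := Real.exists_rat_abs_sub_le_and_den_le α hn
  have hq : (1 : ℝ) ≤ x.den := by exact_mod_cast x.den_pos
  have hn1 : (1 : ℝ) ≤ n := by exact_mod_cast hn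
  rw [le_div_iff₀ (by positivity), Rat.cast_def] at hx
  refine ⟨x.den, mem_Icc.2 ⟨x.den_pos, hxn⟩, x.num, ?_, ?_, hx⟩
  · have hhalf : |α - x.num / x.den| ≤ 1 / 2 := by
      have h2 : 2 ≤ ((n : ℝ) + 1) * x.den := by nlinarith only [hn1, hq]
      nlinarith only [abs_nonneg (α - x.num / x.den), h2, hx]
    have hle : |(x.num : ℝ) / x.den| ≤ 1 := by
      rw [← sub_sub_cancel α ((x.num : ℝ) / x.den)]
      exact (abs_sub _ _).trans (by linarith)
    rw [abs_div, div_le_one (by positivity), Nat.abs_cast] at hle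
    rw [mem_Icc, ← abs_le]
    exact_mod_cast hle
  · rw [Int.cast_neg, IsUnit.neg_iff, ZMod.coe_int_isUnit_iff_isCoprime,
      Int.isCoprime_iff_gcd_eq_one, Int.gcd_comm]
    exact x.reduced

variable {ι : Type*} [Fintype ι]

/-- The constant in the trivial bound for `thetaProd`, valid on every Dirichlet arc; `41` is an
upper bound for `1 + 4 * π ^ 2`. -/
noncomputable def trivialConst (A : ι → ℕ) : ℝ :=
  √(2 * π) ^ Fintype.card ι * ∏ i, (1 + A i * (41 : ℝ))

/-- The relative error of the model `majorTerm` on the major arcs `q ≤ W`, `|β| ≤ W * l`. -/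
noncomputable def majorError (A : ι → ℕ) (W l : ℝ) : ℝ :=
  √(2 * π) ^ Fintype.card ι *
    (∏ i, (1 + A i * ((1 + 4 * π ^ 2 * W ^ 2) * W ^ 2 * l)) - 1)

/-- The weight of the arcs with denominator `q` in the bound for `thetaProd` off the central
arc. -/
noncomputable def arcWeight (A : ι → ℕ) (P W : ℕ) (l : ℝ) (q : ℕ) : ℝ :=
  (if P < q then volumeFactor A else 0) + trivialConst A * (W : ℝ) ^ (-(1 / 2) : ℝ) +
    (if W < q then trivialConst A else 0) + majorError A W l

lemma volumeFactor_nonneg (A : ι → ℕ) : 0 ≤ volumeFactor A :=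
  prod_nonneg fun _ _ => Real.sqrt_nonneg _

lemma trivialConst_nonneg (A : ι → ℕ) : 0 ≤ trivialConst A := by
  unfold trivialConst
  positivity

lemma majorError_nonneg (A : ι → ℕ) (W : ℝ) {l : ℝ} (hl : 0 < l) : 0 ≤ majorError A W l := by
  refine mul_nonneg (by positivity) (sub_nonneg.2 (one_le_prod fun i _ => ?_))
  have : 0 ≤ A i * ((1 + 4 * π ^ 2 * W ^ 2) * W ^ 2 * l) := by positivity
  linarith

lemma majorError_le_arcWeight (A : ι → ℕ) (P W : ℕ) (l : ℝ) (q : ℕ) :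
    majorError A W l ≤ arcWeight A P W l q := by
  have hvol := volumeFactor_nonneg A
  have htriv := trivialConst_nonneg A
  have hpow : 0 ≤ trivialConst A * (W : ℝ) ^ (-(1 / 2) : ℝ) := by positivity
  unfold arcWeight
  split_ifs <;> linarith

lemma arcWeight_nonneg (A : ι → ℕ) (P W : ℕ) {l : ℝ} (hl : 0 < l) (q : ℕ) :
    0 ≤ arcWeight A P W l q :=
  (majorError_nonneg A W hl).trans (majorError_le_arcWeight A P W l q)

variable {A : ι → ℕ} (b : ι → ℤ) (N : ℤ) {l : ℝ} (hA : ∀ i, 0 < A i)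
  (hι : 5 ≤ Fintype.card ι) (hl : 0 < l)
include hι hl

lemma cfreq_mul_rpow_neg_card_le {q : ℕ} (hq : 0 < q) {v β : ℝ} (hv : 0 < v)
    (hvw : v * l ≤ ‖cfreq l β‖) :
    (‖cfreq l β‖ * q) ^ (-(Fintype.card ι / 2 : ℝ)) ≤
      v ^ (-(1 / 2) : ℝ) * ((q : ℝ) ^ (-(5 / 2) : ℝ) * arcKernel (Fintype.card ι / 2) l β) := by
  have hcard : (5 : ℝ) ≤ Fintype.card ι := by exact_mod_cast hι
  exact cfreq_mul_rpow_neg_le (by linarith) hl hq hv hvw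

lemma cfreq_mul_rpow_neg_card_le_one (β : ℝ) {q : ℕ} (hq : 0 < q) :
    (‖cfreq l β‖ * q) ^ (-(Fintype.card ι / 2 : ℝ)) ≤
      (q : ℝ) ^ (-(5 / 2) : ℝ) * arcKernel (Fintype.card ι / 2) l β := by
  simpa only [Real.one_rpow, one_mul] using
    cfreq_mul_rpow_neg_card_le hι hl hq one_pos ((one_mul l).trans_le (le_norm_cfreq β))

include hA

lemma norm_thetaProd_le_trivialConst_mul {q : ℕ} [NeZero q] {a : ℤ} (ha : IsUnit (a : ZMod q))
    {v β : ℝ} (hv : 0 < v) (hvw : v * l ≤ ‖cfreq l β‖) (hβ : ‖cfreq l β‖ ^ 2 * q ^ 2 / l ≤ 41) :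
    ‖thetaProd A b N l (β - a / q)‖ ≤ trivialConst A * v ^ (-(1 / 2) : ℝ) *
      ((q : ℝ) ^ (-(5 / 2) : ℝ) * arcKernel (Fintype.card ι / 2) l β) := by
  refine (norm_thetaProd_le b N a β hA hl ha hβ).trans ?_
  rw [mul_assoc (trivialConst A)]
  exact mul_le_mul_of_nonneg_left (cfreq_mul_rpow_neg_card_le hι hl (NeZero.pos q) hv hvw)
    (trivialConst_nonneg A)

lemma norm_thetaProd_sub_majorTerm_one_le {W α : ℝ} (hW : 1 ≤ W) (hα : |α| ≤ W * l) :
    ‖thetaProd A b N l α - majorTerm A b N 1 0 l α‖ ≤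
      majorError A W l * arcKernel (Fintype.card ι / 2) l α := by
  have hδ : ‖cfreq l α‖ ^ 2 * ((1 : ℕ) : ℝ) ^ 2 / l ≤ (1 + 4 * π ^ 2 * W ^ 2) * W ^ 2 * l := by
    rw [Nat.cast_one]
    exact sq_norm_cfreq_mul_sq_div_le_of_abs_le hl zero_le_one hW hα
  have happrox := norm_thetaProd_sub_majorTerm_le b N 0 α hA hl (isUnit_of_subsingleton _) hδ
  rw [Int.cast_zero, zero_div, sub_zero] at happrox
  refine happrox.trans (mul_le_mul_of_nonneg_left ?_ (majorError_nonneg A W hl))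
  simpa only [Nat.cast_one, Real.one_rpow, one_mul] using
    cfreq_mul_rpow_neg_card_le_one hι hl α one_pos

variable {b} {P : ℕ} {i₀ : ι} (hP : AbsorbsPrimes P A i₀) (hb : IsCoprime (b i₀) (A i₀))
include hP hb

lemma norm_thetaProd_le_of_major {q : ℕ} [NeZero q] (hq1 : q ≠ 1) {a : ℤ}
    (ha : IsUnit (a : ZMod q)) {W β : ℝ} (hqW : q ≤ W) (hβ : |β| ≤ W * l) :
    ‖thetaProd A b N l (β - a / q)‖ ≤
      ((if P < q then volumeFactor A else 0) + majorError A W l) *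
        ((q : ℝ) ^ (-(5 / 2) : ℝ) * arcKernel (Fintype.card ι / 2) l β) := by
  have happrox := norm_thetaProd_sub_majorTerm_le b N a β hA hl ha
    (sq_norm_cfreq_mul_sq_div_le_of_abs_le hl q.cast_nonneg hqW hβ)
  have hmajor := norm_majorTerm_le_of_absorbsPrimes N a (l := l) β hP hb hq1 ha
  have hkernel := cfreq_mul_rpow_neg_card_le_one hι hl β (NeZero.pos q)
  calc ‖thetaProd A b N l (β - a / q)‖
      ≤ ‖majorTerm A b N q a l β‖ + ‖thetaProd A b N l (β - a / q) - majorTerm A b N q a l β‖ :=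
        norm_le_norm_add_norm_sub' _ _
    _ ≤ ((if P < q then volumeFactor A else 0) + majorError A W l) *
          (‖cfreq l β‖ * q) ^ (-(Fintype.card ι / 2 : ℝ)) := by
        rw [add_mul]
        exact add_le_add hmajor happrox
    _ ≤ _ := by
        have hvol := volumeFactor_nonneg A
        have herr := majorError_nonneg A W hl
        gcongr

lemma norm_thetaProd_le_arcWeight_mul {q W : ℕ} [NeZero q] (hW : 1 ≤ W) {a : ℤ}
    (ha : IsUnit (a : ZMod q)) {β : ℝ} (hβ : ‖cfreq l β‖ ^ 2 * q ^ 2 / l ≤ 41)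
    (hq1 : |β| ≤ W * l → q ≠ 1) :
    ‖thetaProd A b N l (β - a / q)‖ ≤ arcWeight A P W l q *
      ((q : ℝ) ^ (-(5 / 2) : ℝ) * arcKernel (Fintype.card ι / 2) l β) := by
  have hvol := volumeFactor_nonneg A
  have htriv := trivialConst_nonneg A
  have herr := majorError_nonneg A W hl
  have hWpow : 0 ≤ trivialConst A * (W : ℝ) ^ (-(1 / 2) : ℝ) := by positivity
  have hkernel : 0 ≤ (q : ℝ) ^ (-(5 / 2) : ℝ) * arcKernel (Fintype.card ι / 2) l β :=
    mul_nonneg (by positivity) (arcKernel_nonneg _ hl β)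
  rcases lt_or_ge W q with hWq | hqW
  · have h := norm_thetaProd_le_trivialConst_mul b N hA hι hl ha one_pos
      ((one_mul l).trans_le (le_norm_cfreq β)) hβ
    rw [Real.one_rpow, mul_one] at h
    refine h.trans (mul_le_mul_of_nonneg_right ?_ hkernel)
    rw [arcWeight, if_pos hWq]
    split_ifs <;> linarith
  rcases le_or_gt |β| (W * l) with hβW | hβW
  · refine (norm_thetaProd_le_of_major N hA hι hl hP hb (hq1 hβW) ha
      (by exact_mod_cast hqW) hβW).trans (mul_le_mul_of_nonneg_right ?_ hkernel)
    rw [arcWeight, if_neg hqW.not_gt]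
    linarith
  · have hWβ : W * l ≤ ‖cfreq l β‖ := by
      have hπ : 1 ≤ 2 * π := by linarith [Real.pi_gt_three]
      exact hβW.le.trans ((le_mul_of_one_le_left (abs_nonneg β) hπ).trans (abs_le_norm_cfreq β))
    refine (norm_thetaProd_le_trivialConst_mul b N hA hι hl ha
      (by exact_mod_cast hW) hWβ hβ).trans (mul_le_mul_of_nonneg_right ?_ hkernel)
    rw [arcWeight, if_neg hqW.not_gt]
    split_ifs <;> linarith

/-- The hypotheses on `n` say that `n` is the integer part of `l ^ (-1 / 2)`. -/
lemma norm_thetaProd_sub_indicator_le {W n : ℕ} (hW : 1 ≤ W) (hWl : W * l < 1 / 2)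
    (hn : n ^ 2 * l ≤ 1) (hn' : 1 ≤ ((n : ℝ) + 1) ^ 2 * l) (hn0 : 0 < n) {α : ℝ}
    (hα : |α| ≤ 1 / 2) :
    ‖thetaProd A b N l α -
        (Set.Icc (-(W * l)) (W * l)).indicator (majorTerm A b N 1 0 l) α‖ ≤
      rationalKernel (arcWeight A P W l) (Fintype.card ι / 2) l n α := by
  have hweight := arcWeight_nonneg A P W hl
  by_cases hcentral : |α| ≤ W * l
  · have hmem : α ∈ Set.Icc (-(W * l)) (W * l) := abs_le.1 hcentral
    have hle := le_rationalKernel hweight hl (Fintype.card ι / 2) α (n := n) (q := 1) (k := 0)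
      (mem_Icc.2 ⟨le_rfl, hn0⟩) (mem_Icc.2 ⟨by norm_num, by norm_num⟩)
    simp only [Nat.cast_one, Real.one_rpow, one_mul, Int.cast_zero, zero_div, sub_zero] at hle
    rw [Set.indicator_of_mem hmem]
    refine (norm_thetaProd_sub_majorTerm_one_le b N hA hι hl (by exact_mod_cast hW)
      hcentral).trans (le_trans ?_ hle)
    exact mul_le_mul_of_nonneg_right (majorError_le_arcWeight A P W l 1) (arcKernel_nonneg _ hl α)
  · have hnotMem : α ∉ Set.Icc (-(W * l)) (W * l) := fun h => hcentral (abs_le.2 h)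
    rw [Set.indicator_of_notMem hnotMem, sub_zero]
    obtain ⟨q, hq, k, hk, ha, hβ⟩ := exists_abs_sub_div_mul_le_one hα hn0
    have : NeZero q := ⟨Nat.one_le_iff_ne_zero.1 (mem_Icc.1 hq).1⟩
    have hqn : (q : ℝ) ≤ n := by exact_mod_cast (mem_Icc.1 hq).2
    have hbound := norm_thetaProd_le_arcWeight_mul N hA hι hl hP hb hW ha
      (sq_norm_cfreq_mul_sq_div_le hl q.cast_nonneg hqn hn hn' hβ) fun hβW hq1 => hcentral ?_
    · rw [Int.cast_neg, neg_div, sub_neg_eq_add, sub_add_cancel] at hbound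
      exact hbound.trans (le_rationalKernel hweight hl _ α hq hk)
    · subst hq1
      rw [Nat.cast_one, div_one] at hβW
      have hk0 : k = 0 := by
        have hklt : |(k : ℝ)| < 1 := by
          rw [← sub_sub_cancel α (k : ℝ)]
          exact (abs_sub _ _).trans_lt (by linarith only [hα, hβW, hWl])
        exact Int.abs_lt_one_iff.1 (by exact_mod_cast hklt)
      rwa [hk0, Int.cast_zero, sub_zero] at hβW

end Arcs

/-! ### The lower bound from the circle method -/

section ZetaTail

/-- The tail `∑_{q > P} q ^ (-3 / 2)` of the singular series. -/
noncomputable def zetaTail (P : ℕ) : ℝ :=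
  ∑' q : ℕ, if P < q then (q : ℝ) ^ (-(3 / 2) : ℝ) else 0

lemma summable_rpow_neg_three_halves : Summable fun q : ℕ => (q : ℝ) ^ (-(3 / 2) : ℝ) :=
  Real.summable_nat_rpow.2 (by norm_num)

lemma norm_ite_rpow_le (P q : ℕ) :
    ‖if P < q then (q : ℝ) ^ (-(3 / 2) : ℝ) else 0‖ ≤ (q : ℝ) ^ (-(3 / 2) : ℝ) := by
  have hq : 0 ≤ (q : ℝ) ^ (-(3 / 2) : ℝ) := by positivity
  split_ifs
  · rw [Real.norm_of_nonneg hq]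
  · rwa [norm_zero]

lemma sum_ite_rpow_le_zetaTail (P : ℕ) (s : Finset ℕ) :
    ∑ q ∈ s, (if P < q then (q : ℝ) ^ (-(3 / 2) : ℝ) else 0) ≤ zetaTail P :=
  (summable_rpow_neg_three_halves.of_norm_bounded (norm_ite_rpow_le P)).sum_le_tsum s
    fun q _ => by positivity

lemma tendsto_zetaTail : Tendsto zetaTail atTop (𝓝 0) := by
  have hterm (q : ℕ) : Tendsto (fun P : ℕ => if P < q then (q : ℝ) ^ (-(3 / 2) : ℝ) else 0) atTop
      (𝓝 0) :=
    tendsto_const_nhds.congr' ((eventually_ge_atTop q).mono fun P hP => (if_neg hP.not_gt).symm)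
  simpa only [tsum_zero] using! tendsto_tsum_of_dominated_convergence
    summable_rpow_neg_three_halves hterm (.of_forall norm_ite_rpow_le)

end ZetaTail

section MajorIntegral

variable {ι : Type*} [Fintype ι] {A : ι → ℕ} (b : ι → ℤ) (N : ℤ) {l : ℝ}
  (hι : 5 ≤ Fintype.card ι) (hl : 0 < l)
include hι hl

lemma integrable_majorTerm_one : Integrable (majorTerm A b N 1 0 l) := by
  have hcard : (5 : ℝ) ≤ Fintype.card ι := by exact_mod_cast hι
  have hphase : Continuous fun β : ℝ => cexp (2 * π * I * (β * diagDepth A b N : ℝ)) := by fun_prop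
  refine Integrable.congr ?_ (.of_forall fun β => (majorTerm_one b N β).symm)
  refine ((integrable_inv_cfreq_cpow (by linarith) hl).bdd_mul (c := 1)
    hphase.aestronglyMeasurable (.of_forall fun β => ?_)).const_mul _
  rw [norm_cexp_phase]

lemma integral_majorTerm_one (hD : 0 < diagDepth A b N) :
    ∫ β, majorTerm A b N 1 0 l β = ((volumeFactor A * (diagDepth A b N ^
      (Fintype.card ι / 2 - 1 : ℝ) * Real.exp (-l * diagDepth A b N) /
        Real.Gamma (Fintype.card ι / 2)) : ℝ) : ℂ) := by
  have hcard : (5 : ℝ) ≤ Fintype.card ι := by exact_mod_cast hι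
  simp_rw [majorTerm_one]
  rw [integral_const_mul, integral_cexp_mul_inv_cfreq_cpow (by linarith) hl hD,
    ← Complex.ofReal_mul]

lemma norm_majorTerm_one_le {W β : ℝ} (hW : 0 < W) (hβ : W * l ≤ |β|) :
    ‖majorTerm A b N 1 0 l β‖ ≤
      volumeFactor A * W ^ (-(1 / 2) : ℝ) * arcKernel (Fintype.card ι / 2) l β := by
  have hWβ : W * l ≤ ‖cfreq l β‖ := by
    have hπ : 1 ≤ 2 * π := by linarith [Real.pi_gt_three]
    exact hβ.trans ((le_mul_of_one_le_left (abs_nonneg β) hπ).trans (abs_le_norm_cfreq β))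
  refine (norm_majorTerm_le_of_coprime b N 0 β (isUnit_of_subsingleton _)
    fun _ => Nat.coprime_one_left _).trans ?_
  rw [mul_assoc]
  refine mul_le_mul_of_nonneg_left ?_ (volumeFactor_nonneg A)
  simpa only [Nat.cast_one, Real.one_rpow, one_mul] using
    cfreq_mul_rpow_neg_card_le hι hl one_pos hW hWβ

lemma norm_setIntegral_indicator_majorTerm_sub_le {W : ℝ} (hW : 0 < W) (hWl : W * l < 1 / 2) :
    ‖(∫ α in Set.Ioc (-(1 / 2)) (1 / 2),
        (Set.Icc (-(W * l)) (W * l)).indicator (majorTerm A b N 1 0 l) α) -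
      ∫ α, majorTerm A b N 1 0 l α‖ ≤
      volumeFactor A * W ^ (-(1 / 2) : ℝ) * (π * l ^ (1 - Fintype.card ι / 2 : ℝ)) := by
  set s := Set.Icc (-(W * l)) (W * l)
  have hinter : Set.Ioc (-(1 / 2)) (1 / 2) ∩ s = s :=
    Set.inter_eq_right.2 fun α hα => ⟨by linarith [hα.1], by linarith [hα.2]⟩
  have hint := integrable_majorTerm_one (A := A) b N hι hl
  have hkernel := (integrable_arcKernel (Fintype.card ι / 2) hl).const_mul
    (volumeFactor A * W ^ (-(1 / 2) : ℝ))
  have hvol := volumeFactor_nonneg A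
  rw [setIntegral_indicator measurableSet_Icc, hinter,
    ← integral_add_compl measurableSet_Icc hint, sub_add_cancel_left, norm_neg]
  calc ‖∫ α in sᶜ, majorTerm A b N 1 0 l α‖
      ≤ ∫ α in sᶜ, volumeFactor A * W ^ (-(1 / 2) : ℝ) * arcKernel (Fintype.card ι / 2) l α := by
        refine norm_integral_le_of_norm_le hkernel.integrableOn
          ((ae_restrict_iff' measurableSet_Icc.compl).2 (.of_forall fun α hα => ?_))
        exact norm_majorTerm_one_le b N hι hl hW (not_le.1 fun h => hα (abs_le.1 h)).le
    _ ≤ ∫ α, volumeFactor A * W ^ (-(1 / 2) : ℝ) * arcKernel (Fintype.card ι / 2) l α :=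
        setIntegral_le_integral hkernel
          (.of_forall fun α => mul_nonneg (by positivity) (arcKernel_nonneg _ hl α))
    _ = _ := by rw [integral_const_mul, integral_arcKernel _ hl]

end MajorIntegral

section LowerBound

variable {ι : Type*} [Fintype ι]

/-- The total error of the circle method, relative to `l ^ (1 - card ι / 2)`. -/
noncomputable def circleError (A : ι → ℕ) (P W : ℕ) (l : ℝ) : ℝ :=
  π * (volumeFactor A * (W : ℝ) ^ (-(1 / 2) : ℝ)) +
    3 * π * (volumeFactor A * zetaTail P +
      trivialConst A * (W : ℝ) ^ (-(1 / 2) : ℝ) * zetaTail 0 + trivialConst A * zetaTail W +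
      majorError A W l * zetaTail 0)

lemma sum_arcWeight_mul_rpow_le (A : ι → ℕ) (P W : ℕ) {l : ℝ} (hl : 0 < l) (n : ℕ) :
    ∑ q ∈ Icc 1 n, arcWeight A P W l q * (q : ℝ) ^ (-(3 / 2) : ℝ) ≤
      volumeFactor A * zetaTail P + trivialConst A * (W : ℝ) ^ (-(1 / 2) : ℝ) * zetaTail 0 +
        trivialConst A * zetaTail W + majorError A W l * zetaTail 0 := by
  have hsplit (q : ℕ) (hq : q ∈ Icc 1 n) : arcWeight A P W l q * (q : ℝ) ^ (-(3 / 2) : ℝ) =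
      volumeFactor A * (if P < q then (q : ℝ) ^ (-(3 / 2) : ℝ) else 0) +
      trivialConst A * (W : ℝ) ^ (-(1 / 2) : ℝ) *
        (if 0 < q then (q : ℝ) ^ (-(3 / 2) : ℝ) else 0) +
      trivialConst A * (if W < q then (q : ℝ) ^ (-(3 / 2) : ℝ) else 0) +
      majorError A W l * (if 0 < q then (q : ℝ) ^ (-(3 / 2) : ℝ) else 0) := by
    rw [if_pos (show 0 < q from (mem_Icc.1 hq).1), arcWeight]
    split_ifs <;> ring
  have hvol := volumeFactor_nonneg A
  have htriv := trivialConst_nonneg A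
  have herr := majorError_nonneg A W hl
  rw [sum_congr rfl hsplit]
  simp only [sum_add_distrib, ← mul_sum]
  gcongr <;> exact sum_ite_rpow_le_zetaTail _ _

lemma volumeFactor_pos {A : ι → ℕ} (hA : ∀ i, 0 < A i) : 0 < volumeFactor A :=
  prod_pos fun i _ => Real.sqrt_pos.2 (div_pos Real.pi_pos (by exact_mod_cast hA i))

variable {A : ι → ℕ} {b : ι → ℤ} (N : ℤ) {P W : ℕ} {i₀ : ι} (hA : ∀ i, 0 < A i)
  (hι : 5 ≤ Fintype.card ι) (hP : AbsorbsPrimes P A i₀) (hb : IsCoprime (b i₀) (A i₀))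
  (hW : 1 ≤ W)
include hA hι hP hb hW

lemma norm_setIntegral_thetaProd_sub_indicator_le {l : ℝ} (hl : 0 < l) (hWl : W * l < 1 / 2)
    {n : ℕ} (hn : n ^ 2 * l ≤ 1) (hn' : 1 ≤ ((n : ℝ) + 1) ^ 2 * l) (hn0 : 0 < n) :
    ‖(∫ α in Set.Ioc (-(1 / 2)) (1 / 2), thetaProd A b N l α) -
      ∫ α in Set.Ioc (-(1 / 2)) (1 / 2),
        (Set.Icc (-(W * l)) (W * l)).indicator (majorTerm A b N 1 0 l) α‖ ≤
      3 * π * l ^ (1 - Fintype.card ι / 2 : ℝ) *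
        ∑ q ∈ Icc 1 n, arcWeight A P W l q * (q : ℝ) ^ (-(3 / 2) : ℝ) := by
  have htheta : IntegrableOn (thetaProd A b N l) (Set.Ioc (-(1 / 2)) (1 / 2)) :=
    (continuous_thetaProd b N hA hl).integrableOn_Ioc
  have hmajor : Integrable
      ((Set.Icc (-(W * l)) (W * l)).indicator (majorTerm A b N 1 0 l)) :=
    (integrable_majorTerm_one b N hι hl).indicator measurableSet_Icc
  rw [← integral_sub htheta hmajor.integrableOn]
  refine le_trans ?_ (setIntegral_rationalKernel_le (arcWeight_nonneg A P W hl) hl _ n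
    (Set.Ioc (-(1 / 2)) (1 / 2)))
  refine norm_integral_le_of_norm_le (integrable_rationalKernel hl _ _ n).integrableOn
    ((ae_restrict_iff' measurableSet_Ioc).2 (.of_forall fun α hα => ?_))
  exact norm_thetaProd_sub_indicator_le N hA hι hl hP hb hW hWl hn hn' hn0
    (abs_le.2 ⟨hα.1.le, hα.2⟩)

lemma norm_setIntegral_thetaProd_sub_le {l : ℝ} (hl : 0 < l) (hl1 : l ≤ 1)
    (hWl : W * l < 1 / 2) :
    ‖(∫ α in Set.Ioc (-(1 / 2)) (1 / 2), thetaProd A b N l α) -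
      ∫ α, majorTerm A b N 1 0 l α‖ ≤
      circleError A P W l * l ^ (1 - Fintype.card ι / 2 : ℝ) := by
  set n := ⌊√(1 / l)⌋₊
  have hsq : √(1 / l) ^ 2 * l = 1 := by
    rw [Real.sq_sqrt (by positivity)]
    field_simp
  have hn0 : 0 < n := Nat.floor_pos.2 (Real.one_le_sqrt.2 ((one_le_div hl).2 hl1))
  have hn : n ^ 2 * l ≤ 1 := by
    rw [← hsq]
    gcongr
    exact Nat.floor_le (Real.sqrt_nonneg _)
  have hn' : 1 ≤ ((n : ℝ) + 1) ^ 2 * l := by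
    refine hsq.symm.trans_le ?_
    gcongr
    exact (Nat.lt_floor_add_one (√(1 / l))).le
  have harcs := norm_setIntegral_thetaProd_sub_indicator_le N hA hι hP hb hW hl hWl hn hn' hn0
  have htail := norm_setIntegral_indicator_majorTerm_sub_le (A := A) b N hι hl
    (by exact_mod_cast hW) hWl
  refine (norm_sub_le_norm_sub_add_norm_sub _ _ _).trans ((add_le_add harcs htail).trans ?_)
  have hsum := mul_le_mul_of_nonneg_left (sum_arcWeight_mul_rpow_le A P W hl n)
    (show 0 ≤ 3 * π * l ^ (1 - Fintype.card ι / 2 : ℝ) by positivity)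
  refine (add_le_add_left hsum _).trans_eq ?_
  rw [circleError]
  ring

lemma rpow_mul_sub_circleError_le (hD : 1 ≤ diagDepth A b N)
    (hWD : W * (diagDepth A b N)⁻¹ < 1 / 2) :
    (volumeFactor A * (Real.exp (-1) / Real.Gamma (Fintype.card ι / 2)) -
        circleError A P W (diagDepth A b N)⁻¹) * diagDepth A b N ^ (Fintype.card ι / 2 - 1 : ℝ) ≤
      Real.exp (-1) * (diagZeros A b N).ncard := by
  set D := diagDepth A b N
  have hD0 : 0 < D := one_pos.trans_le hD
  have hl : 0 < D⁻¹ := inv_pos.2 hD0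
  have hexp : -D⁻¹ * D = -1 := by field_simp
  have hpow : D⁻¹ ^ (1 - Fintype.card ι / 2 : ℝ) = D ^ (Fintype.card ι / 2 - 1 : ℝ) := by
    rw [Real.inv_rpow hD0.le, ← Real.rpow_neg hD0.le, neg_sub]
  have hcount := norm_integral_thetaProd_le b N hA (-(1 / 2)) hl
  rw [show (-(1 / 2) + 1 : ℝ) = 1 / 2 by norm_num,
    intervalIntegral.integral_of_le (by norm_num), hexp] at hcount
  have herror := norm_setIntegral_thetaProd_sub_le N hA hι hP hb hW hl (inv_le_one_of_one_le₀ hD)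
    hWD
  rw [hpow] at herror
  have hmain : ‖∫ α, majorTerm A b N 1 0 D⁻¹ α‖ =
      volumeFactor A * (D ^ (Fintype.card ι / 2 - 1 : ℝ) * Real.exp (-1) /
        Real.Gamma (Fintype.card ι / 2)) := by
    have hvol := volumeFactor_nonneg A
    rw [integral_majorTerm_one b N hι hl hD0, hexp, Complex.norm_real,
      Real.norm_of_nonneg (by positivity)]
  have htriangle := norm_sub_norm_le (∫ α, majorTerm A b N 1 0 D⁻¹ α)
    (∫ α in Set.Ioc (-(1 / 2)) (1 / 2), thetaProd A b N D⁻¹ α)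
  rw [norm_sub_rev, hmain] at htriangle
  rw [sub_mul]
  refine le_trans (le_of_eq ?_)
    ((sub_le_comm.1 (htriangle.trans herror)).trans hcount)
  ring

end LowerBound

section Parameters

variable {ι : Type*} [Fintype ι]

lemma continuous_circleError (A : ι → ℕ) (P W : ℕ) : Continuous (circleError A P W) := by
  unfold circleError majorError
  fun_prop

lemma majorError_zero (A : ι → ℕ) (W : ℝ) : majorError A W 0 = 0 := by
  simp [majorError]

lemma tendsto_circleError_zero (A : ι → ℕ) (P : ℕ) :
    Tendsto (fun W : ℕ => circleError A P W 0) atTop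
      (𝓝 (3 * π * (volumeFactor A * zetaTail P))) := by
  have hpow : Tendsto (fun W : ℕ => (W : ℝ) ^ (-(1 / 2) : ℝ)) atTop (𝓝 0) :=
    (tendsto_rpow_neg_atTop (by norm_num)).comp tendsto_natCast_atTop_atTop
  have h := ((hpow.const_mul (volumeFactor A)).const_mul π).add
    ((((((hpow.const_mul (trivialConst A)).mul_const (zetaTail 0)).const_add
      (volumeFactor A * zetaTail P)).add (tendsto_zetaTail.const_mul (trivialConst A))).const_mul
        (3 * π)))
  simp only [mul_zero, zero_mul, add_zero, zero_add] at h
  simpa only [circleError, majorError_zero, zero_mul, add_zero] using h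

/-- Since `P` does not depend on `A`, the primes below `P` can be absorbed into `A` afterwards. -/
theorem exists_rpow_diagDepth_le_ncard_diagZeros (hι : 5 ≤ Fintype.card ι) :
    ∃ P : ℕ, ∀ (A : ι → ℕ) (i₀ : ι), (∀ i, 0 < A i) → AbsorbsPrimes P A i₀ →
      ∃ c > (0 : ℝ), ∃ D₀ : ℝ, ∀ (b : ι → ℤ) (N : ℤ), IsCoprime (b i₀) (A i₀) →
        D₀ ≤ diagDepth A b N →
          c * diagDepth A b N ^ (Fintype.card ι / 2 - 1 : ℝ) ≤ (diagZeros A b N).ncard := by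
  set g : ℝ := Real.exp (-1) / Real.Gamma (Fintype.card ι / 2) with hg
  have hg0 : 0 < g :=
    div_pos (Real.exp_pos _) (Real.Gamma_pos_of_pos (by have := hι; positivity))
  obtain ⟨P, hP⟩ : ∃ P, 3 * π * zetaTail P < g / 2 :=
    ((tendsto_zetaTail.const_mul (3 * π)).eventually_lt_const (by simpa using hg0)).exists
  refine ⟨P, fun A i₀ hA habsorb => ?_⟩
  have hvol := volumeFactor_pos hA
  obtain ⟨W, hWerror, hW⟩ : ∃ W : ℕ, circleError A P W 0 < volumeFactor A * (g / 2) ∧ 1 ≤ W := by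
    refine (((tendsto_circleError_zero A P).eventually_lt_const ?_).and
      (eventually_ge_atTop 1)).exists
    rw [mul_left_comm]
    gcongr
  have hWlim : Tendsto (fun l : ℝ => W * l) (𝓝 0) (𝓝 0) :=
    Continuous.tendsto' (by fun_prop) 0 0 (mul_zero _)
  have hsmall : ∀ᶠ D in atTop, circleError A P W D⁻¹ < volumeFactor A * (g / 2) ∧
      W * D⁻¹ < 1 / 2 :=
    tendsto_inv_atTop_zero.eventually
      (((continuous_circleError A P W).continuousAt.eventually_lt_const hWerror).and
        (hWlim.eventually_lt_const (by norm_num)))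
  obtain ⟨D₀, hD₀⟩ := eventually_atTop.1 (hsmall.and (eventually_ge_atTop 1))
  refine ⟨Real.exp 1 * (volumeFactor A * (g / 2)), by positivity, D₀, fun b N hb hD => ?_⟩
  obtain ⟨⟨herror, hWD⟩, hD1⟩ := hD₀ _ hD
  have hbound := rpow_mul_sub_circleError_le N hA hι habsorb hb hW hD1 hWD
  rw [← hg] at hbound
  have hpow : 0 ≤ diagDepth A b N ^ (Fintype.card ι / 2 - 1 : ℝ) := by positivity
  have hhalf : volumeFactor A * (g / 2) * diagDepth A b N ^ (Fintype.card ι / 2 - 1 : ℝ) ≤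
      Real.exp (-1) * (diagZeros A b N).ncard :=
    (mul_le_mul_of_nonneg_right (by linarith) hpow).trans hbound
  rw [Real.exp_neg, inv_mul_eq_div, le_div_iff₀' (Real.exp_pos 1)] at hhalf
  rwa [mul_assoc]

end Parameters

/-! ### Values of homogeneous polynomials -/

section Homogeneous

variable {σ R S : Type*} [CommRing R]

lemma aeval_smul_of_isHomogeneous [CommRing S] [Algebra R S] {p : MvPolynomial σ R} {d : ℕ}
    (hp : p.IsHomogeneous d) (c : S) (v : σ → S) : aeval (c • v) p = c ^ d * aeval v p := by
  rw [aeval_def, aeval_def, eval₂_eq, eval₂_eq, mul_sum]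
  refine sum_congr rfl fun k hk => ?_
  simp_rw [Pi.smul_apply, smul_eq_mul, mul_pow]
  rw [prod_mul_distrib, prod_pow_eq_pow_sum, ← hp.degree_eq_sum_deg_support hk]
  ring

lemma eval_smul_of_isHomogeneous {p : MvPolynomial σ R} {d : ℕ} (hp : p.IsHomogeneous d) (c : R)
    (v : σ → R) : eval (c • v) p = c ^ d * eval v p := by
  simpa only [aeval_eq_eval] using! aeval_smul_of_isHomogeneous hp c v

lemma aeval_intCast [CommRing S] (p : MvPolynomial σ ℤ) (v : σ → ℤ) :
    aeval (fun i => (v i : S)) p = ((eval v p : ℤ) : S) := by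
  simpa [Function.comp_def, aeval_eq_eval] using aeval_algebraMap_apply S v p

lemma eval_modEq {n : ℤ} {x y : σ → ℤ} (hxy : ∀ i, x i ≡ y i [ZMOD n]) (p : MvPolynomial σ ℤ) :
    eval x p ≡ eval y p [ZMOD n] := by
  induction p using MvPolynomial.induction_on with
  | C a => simp only [eval_C, Int.ModEq.refl]
  | add p q hp hq => simpa only [map_add] using hp.add hq
  | mul_X p i hp => simpa only [map_mul, eval_X] using hp.mul (hxy i)

/-- The sum of the absolute values of the coefficients of an integral polynomial. -/
noncomputable def coeffNorm (p : MvPolynomial σ ℤ) : ℝ :=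
  ∑ d ∈ p.support, |((coeff d p : ℤ) : ℝ)|

lemma coeffNorm_nonneg (p : MvPolynomial σ ℤ) : 0 ≤ coeffNorm p :=
  sum_nonneg fun _ _ => abs_nonneg _

lemma abs_eval_le_coeffNorm_mul_pow {p : MvPolynomial σ ℤ} {d : ℕ} (hp : p.IsHomogeneous d)
    {y : σ → ℤ} {S : ℝ} (hy : ∀ i, |(y i : ℝ)| ≤ S) :
    |((eval y p : ℤ) : ℝ)| ≤ coeffNorm p * S ^ d := by
  rw [eval_eq, coeffNorm, sum_mul]
  push_cast
  refine (abs_sum_le_sum_abs _ _).trans (sum_le_sum fun k hk => ?_)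
  rw [abs_mul, abs_prod, hp.degree_eq_sum_deg_support hk, ← prod_pow_eq_pow_sum]
  simp_rw [abs_pow]
  gcongr with i _
  exact hy i

lemma exists_half_abs_eval_mul_pow_le [Finite σ] {p : MvPolynomial σ ℤ} {d : ℕ}
    (hp : p.IsHomogeneous d) {v : σ → ℤ} (hv : eval v p ≠ 0) :
    ∃ δ > (0 : ℝ), δ ≤ 1 ∧ ∀ T > (0 : ℝ), ∀ y : σ → ℤ, (∀ i, |(y i : ℝ) - T * v i| ≤ δ * T) →
      |((eval v p : ℤ) : ℝ)| / 2 * T ^ d ≤ |((eval y p : ℤ) : ℝ)| := by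
  have := Fintype.ofFinite σ
  have hcont : Continuous fun w : σ → ℝ => aeval w p := by
    simp_rw [aeval_def, ← eval_map]
    exact MvPolynomial.continuous_eval _
  have hv' : (0 : ℝ) < |((eval v p : ℤ) : ℝ)| / 2 := by positivity
  obtain ⟨δ, hδ, hnear⟩ := Metric.continuous_iff.1 hcont (fun i => (v i : ℝ)) _ hv'
  refine ⟨min (δ / 2) 1, by positivity, min_le_right _ _, fun T hT y hy => ?_⟩
  have hclose : dist (fun i => (y i : ℝ) / T) (fun i => (v i : ℝ)) < δ := by
    refine lt_of_le_of_lt ((dist_pi_le_iff (half_pos hδ).le).2 fun i => ?_) (half_lt_self hδ)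
    rw [Real.dist_eq, show (y i : ℝ) / T - v i = ((y i : ℝ) - T * v i) / T by field_simp, abs_div,
      abs_of_pos hT, div_le_iff₀ hT]
    exact (hy i).trans (by gcongr; exact min_le_left _ _)
  have hscale : ((eval y p : ℤ) : ℝ) = T ^ d * aeval (fun i => (y i : ℝ) / T) p := by
    rw [← aeval_smul_of_isHomogeneous hp, ← aeval_intCast]
    congr 2
    ext i
    simp only [Pi.smul_apply, smul_eq_mul]
    field_simp
  have hdist := hnear _ hclose
  rw [aeval_intCast, Real.dist_eq, abs_sub_comm] at hdist
  rw [hscale, abs_mul, abs_of_pos (pow_pos hT d), mul_comm]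
  gcongr
  linarith only [hdist, abs_sub_abs_le_abs_sub ((eval v p : ℤ) : ℝ)
    (aeval (fun i => (y i : ℝ) / T) p)]

lemma X_dvd_sub_aeval_update [DecidableEq σ] (i : σ) (p : MvPolynomial σ R) :
    X i ∣ p - aeval (Function.update X i 0) p := by
  induction p using MvPolynomial.induction_on with
  | C a => simp only [aeval_C, algebraMap_eq, sub_self, dvd_zero]
  | add p q hp hq => simpa only [map_add, add_sub_add_comm] using dvd_add hp hq
  | mul_X p j hp =>
    rw [map_mul, aeval_X]
    rcases eq_or_ne j i with rfl | hj
    · simp only [Function.update_self, mul_zero, sub_zero, dvd_mul_left]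
    · rw [Function.update_of_ne hj, ← sub_mul]
      exact hp.mul_right _

lemma exists_eval_ne_zero_of_not_X_dvd [IsDomain R] [Infinite R] {i : σ} {p : MvPolynomial σ R}
    (hp : ¬ X i ∣ p) : ∃ v : σ → R, v i = 0 ∧ eval v p ≠ 0 := by
  classical
  by_contra! hvanish
  refine hp ?_
  suffices hrestrict : aeval (Function.update X i 0) p = 0 by
    have hdvd := X_dvd_sub_aeval_update i p
    rwa [hrestrict, sub_zero] at hdvd
  refine MvPolynomial.funext fun x => ?_
  have hcomp : (eval x).comp (aeval (R := R) (Function.update X i 0)).toRingHom =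
      eval (Function.update x i 0) := by
    refine ringHom_ext (fun a => by simp) fun j => ?_
    rcases eq_or_ne j i with rfl | hj <;> simp [*]
  rw [map_zero, ← hvanish _ (Function.update_self i 0 x), ← hcomp]
  rfl

end Homogeneous

/-! ### Integral diagonalization of quadratic forms -/

section Diagonalization

variable {ι : Type*}

open scoped Pointwise in
lemma exists_quadraticForm_eq_aeval {R S : Type*} [CommRing R] [CommRing S] [Algebra R S]
    {F : MvPolynomial ι R} (hF : F.IsHomogeneous 2) :
    ∃ Q : QuadraticForm S (ι → S), ∀ v, Q v = aeval v F := by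
  have hspan : F ∈ Submodule.span R
      (Set.range (X : ι → MvPolynomial ι R) * Set.range (X : ι → MvPolynomial ι R)) := by
    rwa [← Submodule.span_mul_span, ← homogeneousSubmodule_one_eq_span_X, ← sq,
      homogeneousSubmodule_one_pow]
  clear hF
  induction hspan using Submodule.span_induction with
  | mem p hp =>
    obtain ⟨_, ⟨i, rfl⟩, _, ⟨j, rfl⟩, rfl⟩ := hp
    exact ⟨QuadraticMap.linMulLin (LinearMap.proj i) (LinearMap.proj j), fun v => by simp⟩
  | zero => exact ⟨0, fun v => by simp⟩
  | add p p' _ _ hp hp' =>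
    obtain ⟨⟨Q, hQ⟩, ⟨Q', hQ'⟩⟩ := And.intro hp hp'
    exact ⟨Q + Q', fun v => by simp [hQ, hQ']⟩
  | smul c p _ hp =>
    obtain ⟨Q, hQ⟩ := hp
    exact ⟨algebraMap R S c • Q, fun v => by simp [hQ, Algebra.smul_def]⟩

lemma exists_int_matrix_eq_smul {κ : Type*} [Finite ι] [Finite κ] (N : Matrix ι κ ℚ) :
    ∃ d : ℤ, d ≠ 0 ∧ ∃ M : Matrix ι κ ℤ, M.map (Int.cast : ℤ → ℚ) = (d : ℚ) • N := by
  obtain ⟨d, hd⟩ := IsLocalization.exist_integer_multiples_of_finite (nonZeroDivisors ℤ)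
    fun ij : ι × κ => N ij.1 ij.2
  choose M hM using fun i j => hd (i, j)
  refine ⟨d, nonZeroDivisors.ne_zero d.2, Matrix.of M, ?_⟩
  ext i j
  simpa using hM i j

variable [Fintype ι] [DecidableEq ι]

lemma exists_rat_matrix_diagonalizing {F : MvPolynomial ι ℤ} (hF : F.IsHomogeneous 2) :
    ∃ (N : Matrix ι ι ℚ) (w : ι → ℚ), N.det ≠ 0 ∧
      ∀ u, aeval (N.mulVec u) F = ∑ i, w i * u i ^ 2 := by
  obtain ⟨Q, hQ⟩ := exists_quadraticForm_eq_aeval (S := ℚ) hF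
  obtain ⟨w, ⟨φ⟩⟩ := Q.equivalent_weightedSumSquares
  let reindex : ι ≃ Fin (Module.finrank ℚ (ι → ℚ)) :=
    Fintype.equivFinOfCardEq (Module.finrank_fintype_fun_eq_card ℚ).symm
  let ψ : (ι → ℚ) ≃ₗ[ℚ] (ι → ℚ) :=
    (LinearEquiv.funCongrLeft ℚ ℚ reindex.symm).trans φ.symm.toLinearEquiv
  refine ⟨LinearMap.toMatrix' ψ.toLinearMap, w ∘ reindex, ?_, fun u => ?_⟩
  · rw [LinearMap.det_toMatrix']
    exact ψ.isUnit_det'.ne_zero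
  · have hφ := φ.symm.map_app (LinearEquiv.funCongrLeft ℚ ℚ reindex.symm u)
    rw [hQ, QuadraticMap.weightedSumSquares_apply, ← reindex.sum_comp] at hφ
    rw [LinearMap.toMatrix'_mulVec]
    simpa [← sq] using! hφ

theorem exists_int_matrix_diagonalizing {F : MvPolynomial ι ℤ} (hF : F.IsHomogeneous 2) :
    ∃ (M : Matrix ι ι ℤ) (a : ι → ℤ), M.det ≠ 0 ∧
      ∀ u, eval (M.mulVec u) F = ∑ i, a i * u i ^ 2 := by
  obtain ⟨N, w, hN, hNF⟩ := exists_rat_matrix_diagonalizing hF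
  obtain ⟨d, hd, M, hM⟩ := exists_int_matrix_eq_smul N
  have hcast (u : ι → ℤ) :
      ((eval (M.mulVec u) F : ℤ) : ℚ) = ∑ i, ((d : ℚ) ^ 2 * w i) * (u i : ℚ) ^ 2 := by
    have hmulVec : (fun i => (M.mulVec u i : ℚ)) = (d : ℚ) • N.mulVec fun i => (u i : ℚ) := by
      rw [← Matrix.smul_mulVec, ← hM]
      exact funext (RingHom.map_mulVec (Int.castRingHom ℚ) M u)
    rw [← aeval_intCast, hmulVec, aeval_smul_of_isHomogeneous hF, hNF, mul_sum]
    simp_rw [mul_assoc]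
  have hcoeff (i : ι) : ((eval (M.mulVec (Pi.single i 1)) F : ℤ) : ℚ) = d ^ 2 * w i := by
    rw [hcast, sum_eq_single i (fun j _ hj => by simp [hj]) (by simp)]
    simp
  refine ⟨M, fun i => eval (M.mulVec (Pi.single i 1)) F, fun hdet => ?_, fun u => ?_⟩
  · have hdetN : ((d : ℚ) • N).det = 0 := by
      rw [← hM, ← Int.cast_zero, ← hdet]
      exact (RingHom.map_det (Int.castRingHom ℚ) M).symm
    rw [Matrix.det_smul] at hdetN
    exact mul_ne_zero (pow_ne_zero _ (Int.cast_ne_zero.2 hd)) hN hdetN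
  · have h := hcast u
    simp_rw [← hcoeff] at h
    exact_mod_cast h

lemma exists_int_matrix_diagonalizing_of_posDef {F : MvPolynomial ι ℤ} (hF : F.IsHomogeneous 2)
    (hpos : ∀ v : ι → ℤ, v ≠ 0 → 0 < eval v F) :
    ∃ (M : Matrix ι ι ℤ) (a : ι → ℕ), M.det ≠ 0 ∧ (∀ i, 0 < a i) ∧
      ∀ u, eval (M.mulVec u) F = ∑ i, a i * u i ^ 2 := by
  obtain ⟨M, a, hdet, hM⟩ := exists_int_matrix_diagonalizing hF
  have ha (i : ι) : 0 < a i := by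
    have hvec : M.mulVec (Pi.single i 1) ≠ 0 := fun h0 =>
      Pi.single_ne_zero_iff.2 one_ne_zero (Matrix.eq_zero_of_mulVec_eq_zero hdet h0)
    have hval := hpos _ hvec
    rwa [hM, sum_eq_single i (fun j _ hj => by simp [hj]) (by simp), Pi.single_eq_same, one_pow,
      mul_one] at hval
  lift a to ι → ℕ using fun i => (ha i).le
  exact ⟨M, a, hdet, fun i => Int.natCast_pos.1 (ha i), hM⟩

end Diagonalization

/-! ### The cubic form in diagonal coordinates -/

section Cubic

variable {σ ι μ : Type*}

/-- The polynomial `y_o F(x ∘ f) + ∑ x_j q_j(y) + R(y)`, where `f : ι → μ` selects the variables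
`x_j` that occur in `F`. -/
noncomputable def cubicForm [Fintype μ] (o : σ) (f : ι → μ) (F : MvPolynomial ι ℤ)
    (q : μ → MvPolynomial σ ℤ) (R : MvPolynomial σ ℤ) (x : μ → ℤ) (y : σ → ℤ) : ℤ :=
  y o * eval (x ∘ f) F + ∑ j, x j * eval y (q j) + eval y R

/-- The integral zeros of `cubicForm` in the box of side `2 * B` centred at the origin. -/
def boundedZeros [Fintype μ] (o : σ) (f : ι → μ) (F : MvPolynomial ι ℤ)
    (q : μ → MvPolynomial σ ℤ) (R : MvPolynomial σ ℤ) (B : ℝ) : Set ((μ → ℤ) × (σ → ℤ)) :=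
  {p | (∀ j, |(p.1 j : ℝ)| ≤ B) ∧ (∀ i, |(p.2 i : ℝ)| ≤ B) ∧ cubicForm o f F q R p.1 p.2 = 0}

lemma finite_boundedZeros [Finite σ] [Fintype μ] (o : σ) (f : ι → μ) (F : MvPolynomial ι ℤ)
    (q : μ → MvPolynomial σ ℤ) (R : MvPolynomial σ ℤ) (B : ℝ) :
    (boundedZeros o f F q R B).Finite := by
  classical
  have := Fintype.ofFinite σ
  have hmem (z : ℤ) (hz : |(z : ℝ)| ≤ B) : -⌈B⌉ ≤ z ∧ z ≤ ⌈B⌉ := by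
    rw [← abs_le]
    exact_mod_cast hz.trans (Int.le_ceil B)
  refine (Set.finite_Icc (fun _ => -⌈B⌉, fun _ => -⌈B⌉) (fun _ => ⌈B⌉, fun _ => ⌈B⌉)).subset ?_
  rintro ⟨x, y⟩ ⟨hx, hy, -⟩
  exact ⟨⟨fun j => (hmem _ (hx j)).1, fun i => (hmem _ (hy i)).1⟩,
    ⟨fun j => (hmem _ (hx j)).2, fun i => (hmem _ (hy i)).2⟩⟩

variable [Fintype ι]

/-- The coefficient of `u_k` in `∑ x_i p_i(y)` after the substitution `x = M u`. -/
noncomputable def pullbackCoeff (M : Matrix ι ι ℤ) (p : ι → MvPolynomial σ ℤ) (k : ι) :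
    MvPolynomial σ ℤ :=
  ∑ i, C (M i k) * p i

lemma eval_pullbackCoeff (M : Matrix ι ι ℤ) (p : ι → MvPolynomial σ ℤ) (k : ι) (y : σ → ℤ) :
    eval y (pullbackCoeff M p k) = ∑ i, M i k * eval y (p i) := by
  simp only [pullbackCoeff, map_sum, map_mul, eval_C]

lemma isHomogeneous_pullbackCoeff (M : Matrix ι ι ℤ) {p : ι → MvPolynomial σ ℤ} {d : ℕ}
    (hp : ∀ i, (p i).IsHomogeneous d) (k : ι) : (pullbackCoeff M p k).IsHomogeneous d :=
  IsHomogeneous.sum _ _ _ fun i _ => (hp i).C_mul _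

lemma sum_mulVec_mul_eval (M : Matrix ι ι ℤ) (p : ι → MvPolynomial σ ℤ) (u : ι → ℤ)
    (y : σ → ℤ) :
    ∑ i, M.mulVec u i * eval y (p i) = ∑ k, eval y (pullbackCoeff M p k) * u k := by
  simp_rw [eval_pullbackCoeff, Matrix.mulVec, dotProduct, sum_mul]
  rw [sum_comm]
  exact sum_congr rfl fun k _ => sum_congr rfl fun i _ => by ring

lemma sum_extend_zero_mul [Fintype μ] {f : ι → μ} (hf : f.Injective) (s : ι → ℤ) (g : μ → ℤ) :
    ∑ j, Function.extend f s 0 j * g j = ∑ i, s i * g (f i) := by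
  refine (Fintype.sum_of_injective f hf _ _ (fun j hj => ?_) fun i => ?_).symm
  · rw [Function.extend_apply' _ _ _ hj, Pi.zero_apply, zero_mul]
  · rw [hf.extend_apply]

variable [DecidableEq ι]

lemma pullbackCoeff_mul_diagonal (M : Matrix ι ι ℤ) (s : ι → ℤ) (p : ι → MvPolynomial σ ℤ)
    (k : ι) : pullbackCoeff (M * Matrix.diagonal s) p k = C (s k) * pullbackCoeff M p k := by
  simp_rw [pullbackCoeff, Matrix.mul_diagonal, mul_sum, C_mul]
  exact sum_congr rfl fun i _ => by ring

lemma exists_eval_pullbackCoeff_ne_zero {M : Matrix ι ι ℤ} (hM : M.det ≠ 0)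
    {p : ι → MvPolynomial σ ℤ} {v : σ → ℤ} {i : ι} (hv : eval v (p i) ≠ 0) :
    ∃ k, eval v (pullbackCoeff M p k) ≠ 0 := by
  by_contra! hzero
  refine hM (Matrix.exists_vecMul_eq_zero_iff.1
    ⟨fun i => eval v (p i), fun h0 => hv (congrFun h0 i), funext fun k => ?_⟩)
  rw [Pi.zero_apply, ← hzero k, eval_pullbackCoeff]
  exact sum_congr rfl fun j _ => mul_comm _ _

/-- Integral coordinates `x = M u` in which `F` is the diagonal form `∑ a_i u_i ^ 2`, together with
a base point `v` on the hyperplane `y_o = 0` at which the coefficient of `u_{i₀}` does not vanish,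
and divides the values of all other coefficients. -/
structure DiagonalChart (o : σ) (F : MvPolynomial ι ℤ) (p : ι → MvPolynomial σ ℤ) where
  M : Matrix ι ι ℤ
  a : ι → ℕ
  i₀ : ι
  v : σ → ℤ
  det_ne_zero : M.det ≠ 0
  a_pos : ∀ i, 0 < a i
  eval_mulVec : ∀ u, eval (M.mulVec u) F = ∑ i, a i * u i ^ 2
  v_o : v o = 0
  eval_ne_zero : eval v (pullbackCoeff M p i₀) ≠ 0
  eval_dvd : ∀ i ≠ i₀, ∀ y, eval v (pullbackCoeff M p i₀) ∣ eval y (pullbackCoeff M p i)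

theorem nonempty_diagonalChart {o : σ} {F : MvPolynomial ι ℤ} {p : ι → MvPolynomial σ ℤ}
    (hF : F.IsHomogeneous 2) (hpos : ∀ v : ι → ℤ, v ≠ 0 → 0 < eval v F)
    (hp : ∃ i, ¬ X o ∣ p i) : Nonempty (DiagonalChart o F p) := by
  obtain ⟨M, a, hdet, ha, hM⟩ := exists_int_matrix_diagonalizing_of_posDef hF hpos
  obtain ⟨i, hi⟩ := hp
  obtain ⟨v, hvo, hv⟩ := exists_eval_ne_zero_of_not_X_dvd hi
  obtain ⟨i₀, hi₀⟩ := exists_eval_pullbackCoeff_ne_zero hdet hv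
  let s : ι → ℤ := Function.update (fun _ => eval v (pullbackCoeff M p i₀)) i₀ 1
  have hs₀ : s i₀ = 1 := Function.update_self ..
  have hs (i : ι) (hi : i ≠ i₀) : s i = eval v (pullbackCoeff M p i₀) :=
    Function.update_of_ne hi ..
  have hs_ne (i : ι) : s i ≠ 0 := by
    rcases eq_or_ne i i₀ with rfl | hne
    · exact hs₀ ▸ one_ne_zero
    · exact hs i hne ▸ hi₀
  refine ⟨⟨M * Matrix.diagonal s, fun i => a i * (s i).natAbs ^ 2, i₀, v, ?_,
    fun i => Nat.mul_pos (ha i) (pow_pos (Int.natAbs_pos.2 (hs_ne i)) 2), fun u => ?_, hvo, ?_,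
    fun i hne y => ?_⟩⟩
  · rw [Matrix.det_mul, Matrix.det_diagonal]
    exact mul_ne_zero hdet (prod_ne_zero_iff.2 fun i _ => hs_ne i)
  · rw [← Matrix.mulVec_mulVec, hM]
    refine sum_congr rfl fun i _ => ?_
    rw [Matrix.mulVec_diagonal]
    push_cast
    rw [sq_abs]
    ring
  · rwa [pullbackCoeff_mul_diagonal, hs₀, C_1, one_mul]
  · rw [pullbackCoeff_mul_diagonal, pullbackCoeff_mul_diagonal, hs₀, C_1, one_mul, map_mul, eval_C,
      hs i hne]
    exact dvd_mul_right _ _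

namespace DiagonalChart

variable {o : σ} {F : MvPolynomial ι ℤ} {p : ι → MvPolynomial σ ℤ}

/-- The value `e` of the distinguished linear coefficient at the base point; the zeros constructed
below all have `y ∈ e ℤ^σ`. -/
noncomputable def scale (D : DiagonalChart o F p) : ℤ :=
  eval D.v (pullbackCoeff D.M p D.i₀)

/-- The linear coefficients divided by `scale`; the division is exact at admissible points. -/
noncomputable def linCoeff (D : DiagonalChart o F p) (y : σ → ℤ) (i : ι) : ℤ :=
  eval y (pullbackCoeff D.M p i) / D.scale

/-- A multiple of `2`, of every prime up to `P` and of every `a_i`; fixing `y_o` as a multiple of it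
multiplies the leading coefficients `a_i`, which makes them absorb all bad primes. -/
def level (D : DiagonalChart o F p) (P : ℕ) : ℕ :=
  2 * P.factorial * ∏ i, D.a i

lemma level_pos (D : DiagonalChart o F p) (P : ℕ) : 0 < D.level P :=
  Nat.mul_pos (Nat.mul_pos two_pos P.factorial_pos) (prod_pos fun i _ => D.a_pos i)

lemma a_dvd_level (D : DiagonalChart o F p) (P : ℕ) (i : ι) : D.a i ∣ D.level P :=
  (dvd_prod_of_mem D.a (mem_univ i)).mul_left _

lemma absorbsPrimes_level_mul (D : DiagonalChart o F p) (P : ℕ) :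
    AbsorbsPrimes P (fun i => D.level P * D.a i) D.i₀ := by
  refine fun l hl hor => Dvd.dvd.mul_right ?_ _
  rcases hor with hle | hdvd
  · exact (((hl.dvd_factorial).2 hle).mul_left 2).mul_right _
  · rcases hl.dvd_mul.1 hdvd with htwo | hprod
    · exact htwo.trans ((dvd_mul_right 2 _).mul_right _)
    · obtain ⟨i, -, hi⟩ := (hl.prime.dvd_finsetProd_iff _).1 hprod
      exact (hl.dvd_mul.1 hi).elim id fun h => h.trans (D.a_dvd_level P i)

end DiagonalChart

end Cubic

/-! ### Admissible parameters -/

section Admissible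

variable {σ ι μ : Type*} [Fintype ι] [DecidableEq ι]
  {o : σ} {f : ι → μ} {F : MvPolynomial ι ℤ} {q : μ → MvPolynomial σ ℤ}

namespace DiagonalChart

/-- A pair `z = (y, t)` from which zeros of the cubic form are built: `y` is close to `T v` and
congruent to `v`, with `y_o` fixed, and `t` is a small shift of the variables outside `f`. -/
structure IsAdmissible (D : DiagonalChart o F (q ∘ f)) (L : ℕ) (δ ε T : ℝ)
    (z : (σ → ℤ) × (μ → ℤ)) : Prop where
  apply_o : z.1 o = D.scale ^ 2 * L
  modEq : ∀ i, z.1 i ≡ D.v i [ZMOD D.scale ^ 2 * L]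
  near : ∀ i, |(z.1 i : ℝ) - T * D.v i| ≤ δ * T
  shift_apply : ∀ i, z.2 (f i) = 0
  abs_shift_le : ∀ j, |(z.2 j : ℝ)| ≤ ε * T ^ 2

variable {D : DiagonalChart o F (q ∘ f)} {L : ℕ} {δ ε T : ℝ} {z : (σ → ℤ) × (μ → ℤ)}

lemma IsAdmissible.eval_modEq_scale (hz : D.IsAdmissible L δ ε T z) :
    eval z.1 (pullbackCoeff D.M (q ∘ f) D.i₀) ≡ D.scale [ZMOD D.scale ^ 2 * L] :=
  eval_modEq hz.modEq _

lemma IsAdmissible.scale_mul_linCoeff (hz : D.IsAdmissible L δ ε T z) (i : ι) :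
    D.scale * D.linCoeff z.1 i = eval z.1 (pullbackCoeff D.M (q ∘ f) i) := by
  refine Int.mul_ediv_cancel' ?_
  rcases eq_or_ne i D.i₀ with rfl | hi
  · have hdvd : D.scale ∣ D.scale ^ 2 * L := (dvd_pow_self _ two_ne_zero).mul_right _
    exact (hz.eval_modEq_scale.of_dvd hdvd).dvd_iff.2 dvd_rfl
  · exact D.eval_dvd i hi z.1

lemma IsAdmissible.isCoprime_linCoeff (hz : D.IsAdmissible L δ ε T z) :
    IsCoprime (D.linCoeff z.1 D.i₀) (L : ℤ) := by
  obtain ⟨k, hk⟩ := hz.eval_modEq_scale.symm.dvd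
  rw [← hz.scale_mul_linCoeff] at hk
  have hcancel : D.linCoeff z.1 D.i₀ - 1 = D.scale * L * k :=
    mul_left_cancel₀ D.eval_ne_zero (by change D.scale * _ = D.scale * _; linear_combination hk)
  exact ⟨1, -(D.scale * k), by linear_combination hcancel⟩

lemma IsAdmissible.isCoprime_linCoeff_level_mul {P : ℕ}
    (hz : D.IsAdmissible (D.level P) δ ε T z) :
    IsCoprime (D.linCoeff z.1 D.i₀) ((D.level P * D.a D.i₀ : ℕ) : ℤ) := by
  rw [Nat.cast_mul]
  exact hz.isCoprime_linCoeff.mul_right (hz.isCoprime_linCoeff.of_isCoprime_of_dvd_right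
    (Int.natCast_dvd_natCast.2 (D.a_dvd_level P D.i₀)))

variable (D) in
/-- The point of `ℤ^μ × ℤ^σ` attached to admissible parameters and a vector `u` of diagonal
coordinates. -/
noncomputable def point (z : (σ → ℤ) × (μ → ℤ)) (u : ι → ℤ) : (μ → ℤ) × (σ → ℤ) :=
  (Function.extend f (D.M.mulVec u) 0 + D.scale • z.2, D.scale • z.1)

lemma IsAdmissible.point_fst_comp (hf : f.Injective) (hz : D.IsAdmissible L δ ε T z)
    (u : ι → ℤ) : (D.point z u).1 ∘ f = D.M.mulVec u := by
  ext i
  simp [point, hf.extend_apply, hz.shift_apply i]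

lemma IsAdmissible.point_inj (hf : f.Injective) (hz : D.IsAdmissible L δ ε T z)
    {z' : (σ → ℤ) × (μ → ℤ)} (hz' : D.IsAdmissible L δ ε T z') {u u' : ι → ℤ}
    (h : D.point z u = D.point z' u') : z = z' ∧ u = u' := by
  have hscale : D.scale ≠ 0 := D.eval_ne_zero
  have hfst : z.1 = z'.1 := smul_right_injective _ hscale (congrArg Prod.snd h)
  have hu : u = u' := by
    refine sub_eq_zero.1 (Matrix.eq_zero_of_mulVec_eq_zero D.det_ne_zero ?_)
    rw [Matrix.mulVec_sub, ← hz.point_fst_comp hf, ← hz'.point_fst_comp hf, h, sub_self]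
  have hsnd : z.2 = z'.2 := by
    have hx := congrArg Prod.fst h
    rw [point, point, hu, add_right_inj] at hx
    exact smul_right_injective _ hscale hx
  exact ⟨Prod.ext hfst hsnd, hu⟩

end DiagonalChart

/-- The constant term, in the variables `u`, of the cubic form at the parameters `z = (y, t)`. -/
noncomputable def constTerm [Fintype μ] (q : μ → MvPolynomial σ ℤ) (R : MvPolynomial σ ℤ)
    (z : (σ → ℤ) × (μ → ℤ)) : ℤ :=
  ∑ j, z.2 j * eval z.1 (q j) + eval z.1 R

theorem DiagonalChart.IsAdmissible.cubicForm_point [Fintype μ] (hf : f.Injective)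
    (hq : ∀ j, (q j).IsHomogeneous 2) {R : MvPolynomial σ ℤ} (hR : R.IsHomogeneous 3)
    {D : DiagonalChart o F (q ∘ f)} {L : ℕ} {δ ε T : ℝ} {z : (σ → ℤ) × (μ → ℤ)}
    (hz : D.IsAdmissible L δ ε T z) (u : ι → ℤ) :
    cubicForm o f F q R (D.point z u).1 (D.point z u).2 = D.scale ^ 3 *
      diagEval (fun i => L * D.a i) (D.linCoeff z.1) (constTerm q R z) u := by
  have hlinear : ∑ j, Function.extend f (D.M.mulVec u) 0 j * eval z.1 (q j) =
      D.scale * ∑ i, D.linCoeff z.1 i * u i := by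
    rw [sum_extend_zero_mul hf]
    refine (sum_mulVec_mul_eval D.M (q ∘ f) u z.1).trans ?_
    simp_rw [mul_sum, ← mul_assoc, hz.scale_mul_linCoeff]
  have hsum : ∑ j, (D.point z u).1 j * (D.scale ^ 2 * eval z.1 (q j)) =
      D.scale ^ 3 * (∑ i, D.linCoeff z.1 i * u i + ∑ j, z.2 j * eval z.1 (q j)) := by
    rw [mul_add, pow_succ D.scale 2, mul_assoc, ← hlinear, mul_sum, mul_sum, ← sum_add_distrib]
    refine sum_congr rfl fun j _ => ?_
    simp only [point, Pi.add_apply, Pi.smul_apply, smul_eq_mul]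
    ring
  have hsnd : (D.point z u).2 = D.scale • z.1 := rfl
  rw [cubicForm, hz.point_fst_comp hf, D.eval_mulVec, hsnd]
  simp_rw [eval_smul_of_isHomogeneous (hq _), eval_smul_of_isHomogeneous hR]
  rw [hsum, diagEval, constTerm, sum_add_distrib, Pi.smul_apply, hz.apply_o, smul_eq_mul]
  push_cast
  simp_rw [mul_assoc (L : ℤ), ← mul_sum]
  ring

end Admissible

/-! ### Sizes at admissible points -/

section DiagonalSize

variable {ι : Type*} [Fintype ι] {A : ι → ℕ} {b : ι → ℤ} {N : ℤ}

lemma sq_div_le_diagDepth {i : ι} (hN : (N : ℝ) ≤ (b i : ℝ) ^ 2 / (8 * A i)) :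
    (b i : ℝ) ^ 2 / (8 * A i) ≤ diagDepth A b N := by
  have hterm : (b i : ℝ) ^ 2 / (4 * A i) ≤ ∑ k, (b k : ℝ) ^ 2 / (4 * A k) :=
    single_le_sum (f := fun k => (b k : ℝ) ^ 2 / (4 * A k)) (fun k _ => by positivity) (mem_univ i)
  have htwice : (b i : ℝ) ^ 2 / (4 * A i) = 2 * ((b i : ℝ) ^ 2 / (8 * A i)) := by ring
  rw [diagDepth]
  linarith only [hterm, htwice, hN]

lemma abs_le_of_mem_diagZeros (hA : ∀ i, 0 < A i) {K S : ℝ} (hS : 0 ≤ S)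
    (hb : ∀ i, |(b i : ℝ)| ≤ K * S) (hN : |(N : ℝ)| ≤ S ^ 2) {u : ι → ℤ}
    (hu : u ∈ diagZeros A b N) (i : ι) :
    |(u i : ℝ)| ≤ (Fintype.card ι * K ^ 2 + K + 1) * S := by
  have hA1 (k : ι) : (1 : ℝ) ≤ A k := by exact_mod_cast hA k
  have hterm (k : ι) : (b k : ℝ) ^ 2 / (4 * A k) ≤ K ^ 2 * S ^ 2 := by
    refine (div_le_self (sq_nonneg _) (by linarith only [hA1 k])).trans ?_
    rw [← mul_pow, ← sq_abs (b k : ℝ)]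
    exact pow_le_pow_left₀ (abs_nonneg _) (hb k) 2
  have hdepth : diagDepth A b N ≤ ((Fintype.card ι * K ^ 2 + 1) * S) ^ 2 :=
    calc diagDepth A b N ≤ ∑ _k : ι, K ^ 2 * S ^ 2 + S ^ 2 := by
          rw [diagDepth, sub_eq_add_neg]
          exact add_le_add (sum_le_sum fun k _ => hterm k) ((neg_le_abs _).trans hN)
      _ = (Fintype.card ι * K ^ 2 + 1) * S ^ 2 := by
          rw [sum_const, card_univ, nsmul_eq_mul]
          ring
      _ ≤ (Fintype.card ι * K ^ 2 + 1) ^ 2 * S ^ 2 := by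
          gcongr
          exact le_self_pow₀ (le_add_of_nonneg_left (by positivity)) two_ne_zero
      _ = _ := (mul_pow _ _ _).symm
  have hcenter : |(b i : ℝ) / (2 * A i)| ≤ K * S := by
    rw [abs_div, abs_of_pos (by linarith only [hA1 i] : (0 : ℝ) < 2 * A i)]
    exact (div_le_self (abs_nonneg _) (by linarith only [hA1 i])).trans (hb i)
  have hshift := abs_le_of_sq_le_sq ((sq_add_div_le_diagDepth hA hu i).trans hdepth) (by positivity)
  calc |(u i : ℝ)| = |((u i : ℝ) + b i / (2 * A i)) - b i / (2 * A i)| := by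
        rw [add_sub_cancel_right]
    _ ≤ (Fintype.card ι * K ^ 2 + 1) * S + K * S :=
        (abs_sub _ _).trans (add_le_add hshift hcenter)
    _ = _ := by ring

lemma abs_mulVec_le {M : Matrix ι ι ℤ} {u : ι → ℤ} {U : ℝ} (hu : ∀ k, |(u k : ℝ)| ≤ U) (i : ι) :
    |((M.mulVec u i : ℤ) : ℝ)| ≤ (∑ i, ∑ k, |(M i k : ℝ)|) * U := by
  have hU : 0 ≤ U := (abs_nonneg _).trans (hu i)
  calc |((M.mulVec u i : ℤ) : ℝ)| ≤ ∑ k, |(M i k : ℝ)| * |(u k : ℝ)| := by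
        rw [Matrix.mulVec, dotProduct, Int.cast_sum]
        refine (abs_sum_le_sum_abs _ _).trans_eq (sum_congr rfl fun k _ => ?_)
        rw [Int.cast_mul, abs_mul]
    _ ≤ (∑ k, |(M i k : ℝ)|) * U := by
        rw [sum_mul]
        gcongr with k _
        exact hu k
    _ ≤ _ := mul_le_mul_of_nonneg_right (single_le_sum (f := fun i => ∑ k, |(M i k : ℝ)|)
        (fun i _ => sum_nonneg fun k _ => abs_nonneg _) (mem_univ i)) hU

end DiagonalSize

section AdmissibleSize

variable {σ ι μ : Type*}

lemma abs_constTerm_le [Fintype μ] {q : μ → MvPolynomial σ ℤ} {R : MvPolynomial σ ℤ}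
    (hq : ∀ j, (q j).IsHomogeneous 2) (hR : R.IsHomogeneous 3) {z : (σ → ℤ) × (μ → ℤ)}
    {S X : ℝ} (hy : ∀ i, |(z.1 i : ℝ)| ≤ S) (ht : ∀ j, |(z.2 j : ℝ)| ≤ X) :
    |(constTerm q R z : ℝ)| ≤ (∑ j, coeffNorm (q j)) * X * S ^ 2 + coeffNorm R * S ^ 3 := by
  rw [constTerm, Int.cast_add, Int.cast_sum]
  refine (abs_add_le _ _).trans (add_le_add ?_ (abs_eval_le_coeffNorm_mul_pow hR hy))
  rw [sum_mul, sum_mul]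
  refine (abs_sum_le_sum_abs _ _).trans (sum_le_sum fun j _ => ?_)
  rw [Int.cast_mul, abs_mul, mul_comm (coeffNorm _), mul_assoc]
  exact mul_le_mul (ht j) (abs_eval_le_coeffNorm_mul_pow (hq j) hy) (abs_nonneg _)
    ((abs_nonneg _).trans (ht j))

variable [Fintype ι] [DecidableEq ι] {o : σ} {f : ι → μ} {F : MvPolynomial ι ℤ}
  {q : μ → MvPolynomial σ ℤ} {R : MvPolynomial σ ℤ}

namespace DiagonalChart

variable {D : DiagonalChart o F (q ∘ f)} {L : ℕ} {δ ε T : ℝ} {z : (σ → ℤ) × (μ → ℤ)}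

section Radius

variable [Fintype σ]

/-- A bound for the coordinates of the points at distance at most `1` from the base point. -/
noncomputable def radius {p : ι → MvPolynomial σ ℤ} (D : DiagonalChart o F p) : ℝ :=
  ∑ i, |(D.v i : ℝ)| + 1

lemma radius_pos {p : ι → MvPolynomial σ ℤ} (D : DiagonalChart o F p) : 0 < D.radius := by
  unfold radius
  positivity

lemma IsAdmissible.abs_fst_le (hz : D.IsAdmissible L δ ε T z) (hδ : δ ≤ 1) (hT : 0 ≤ T) (i : σ) :
    |(z.1 i : ℝ)| ≤ D.radius * T := by
  have hv : |(D.v i : ℝ)| ≤ ∑ i, |(D.v i : ℝ)| :=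
    single_le_sum (f := fun i => |(D.v i : ℝ)|) (fun i _ => abs_nonneg _) (mem_univ i)
  calc |(z.1 i : ℝ)| = |T * D.v i + (z.1 i - T * D.v i)| := by rw [add_sub_cancel]
    _ ≤ |(D.v i : ℝ)| * T + δ * T := by
        refine (abs_add_le _ _).trans (add_le_add ?_ (hz.near i))
        rw [abs_mul, abs_of_nonneg hT, mul_comm]
    _ ≤ D.radius * T := by
        rw [radius, add_mul]
        gcongr

variable (D) in
/-- A bound for the linear coefficients at the points at distance at most `1` from the base
point. -/
noncomputable def linBound : ℝ :=
  (∑ i, coeffNorm (pullbackCoeff D.M (q ∘ f) i)) * D.radius ^ 2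

lemma IsAdmissible.abs_linCoeff_le (hz : D.IsAdmissible L δ ε T z)
    (hq : ∀ j, (q j).IsHomogeneous 2) (hδ : δ ≤ 1) (hT : 0 ≤ T) (i : ι) :
    |(D.linCoeff z.1 i : ℝ)| ≤ D.linBound * T ^ 2 := by
  have hscale : |(D.linCoeff z.1 i : ℝ)| ≤
      |((eval z.1 (pullbackCoeff D.M (q ∘ f) i) : ℤ) : ℝ)| := by
    rw [← hz.scale_mul_linCoeff, Int.cast_mul, abs_mul]
    exact le_mul_of_one_le_left (abs_nonneg _) (by exact_mod_cast Int.one_le_abs D.eval_ne_zero)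
  have hhom := isHomogeneous_pullbackCoeff D.M (p := q ∘ f) (fun i => hq (f i)) i
  refine (hscale.trans (abs_eval_le_coeffNorm_mul_pow hhom (hz.abs_fst_le hδ hT))).trans ?_
  rw [linBound, mul_pow, ← mul_assoc]
  gcongr
  exact single_le_sum (f := fun i => coeffNorm (pullbackCoeff D.M (q ∘ f) i))
    (fun i _ => coeffNorm_nonneg _) (mem_univ i)

variable (D) in
/-- The constant by which the box containing `point` exceeds `T ^ 2`. -/
noncomputable def boxConst : ℝ :=
  (∑ i, ∑ k, |(D.M i k : ℝ)|) * (Fintype.card ι * D.linBound ^ 2 + D.linBound + 1) +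
    |(D.scale : ℝ)| * (D.radius + 1)

variable (D) in
lemma linBound_nonneg : 0 ≤ D.linBound :=
  mul_nonneg (sum_nonneg fun _ _ => coeffNorm_nonneg _) (sq_nonneg _)

variable (D) in
lemma boxConst_pos : 0 < D.boxConst := by
  have hscale : (0 : ℝ) < |(D.scale : ℝ)| := abs_pos.2 (Int.cast_ne_zero.2 D.eval_ne_zero)
  have := D.linBound_nonneg
  have := D.radius_pos
  unfold boxConst
  positivity

theorem IsAdmissible.point_mem_boundedZeros [Fintype μ] (hz : D.IsAdmissible L δ ε T z)
    (hf : f.Injective) (hq : ∀ j, (q j).IsHomogeneous 2) (hR : R.IsHomogeneous 3) (hL : 0 < L)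
    (hδ : δ ≤ 1) (hε : ε ≤ 1) (hT : 1 ≤ T) (hN : |(constTerm q R z : ℝ)| ≤ (T ^ 2) ^ 2)
    {u : ι → ℤ}
    (hu : u ∈ diagZeros (fun i => L * D.a i) (D.linCoeff z.1) (constTerm q R z)) :
    D.point z u ∈ boundedZeros o f F q R (D.boxConst * T ^ 2) := by
  have hu_le (k : ι) := abs_le_of_mem_diagZeros (fun i => Nat.mul_pos hL (D.a_pos i))
    (sq_nonneg T) (hz.abs_linCoeff_le hq hδ (zero_le_one.trans hT)) hN hu k
  refine ⟨fun j => ?_, fun i => ?_, ?_⟩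
  · have := D.linBound_nonneg
    have hextend : |((Function.extend f (D.M.mulVec u) 0 j : ℤ) : ℝ)| ≤
        (∑ i, ∑ k, |(D.M i k : ℝ)|) *
          ((Fintype.card ι * D.linBound ^ 2 + D.linBound + 1) * T ^ 2) := by
      by_cases hj : ∃ i, f i = j
      · obtain ⟨i, rfl⟩ := hj
        rw [hf.extend_apply]
        exact abs_mulVec_le hu_le i
      · rw [Function.extend_apply' _ _ _ hj, Pi.zero_apply, Int.cast_zero, abs_zero]
        positivity
    have hshift : |(z.2 j : ℝ)| ≤ (D.radius + 1) * T ^ 2 := (hz.abs_shift_le j).trans <| by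
      gcongr
      linarith only [hε, D.radius_pos]
    simp only [point, Pi.add_apply, Pi.smul_apply, smul_eq_mul, Int.cast_add, Int.cast_mul]
    refine (abs_add_le _ _).trans ?_
    rw [boxConst, add_mul, mul_assoc, mul_assoc, abs_mul]
    gcongr
  · have hfst : |(z.1 i : ℝ)| ≤ (D.radius + 1) * T ^ 2 :=
      (hz.abs_fst_le hδ (zero_le_one.trans hT) i).trans (mul_le_mul (by linarith only)
        (le_self_pow₀ hT two_ne_zero) (zero_le_one.trans hT) (by linarith only [D.radius_pos]))
    simp only [point, Pi.smul_apply, smul_eq_mul, Int.cast_mul]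
    have := D.linBound_nonneg
    rw [boxConst, add_mul, mul_assoc |(D.scale : ℝ)|, abs_mul]
    refine le_add_of_nonneg_of_le (by positivity) ?_
    gcongr
  · rw [hz.cubicForm_point hf hq hR, show diagEval _ _ _ u = 0 from hu, mul_zero]

end Radius

variable (D) in
lemma exists_half_sq_le_abs_linCoeff [Finite σ] (hq : ∀ j, (q j).IsHomogeneous 2) :
    ∃ δ > (0 : ℝ), δ ≤ 1 ∧ ∀ {L : ℕ} {ε T : ℝ} {z : (σ → ℤ) × (μ → ℤ)}, 0 < T →
      D.IsAdmissible L δ ε T z → T ^ 2 / 2 ≤ |(D.linCoeff z.1 D.i₀ : ℝ)| := by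
  have hhom := isHomogeneous_pullbackCoeff D.M (p := q ∘ f) (fun i => hq (f i)) D.i₀
  obtain ⟨δ, hδ, hδ1, hnear⟩ := exists_half_abs_eval_mul_pow_le hhom D.eval_ne_zero
  refine ⟨δ, hδ, hδ1, fun {L ε T z} hT hz => ?_⟩
  have hscale : (0 : ℝ) < |(D.scale : ℝ)| := abs_pos.2 (Int.cast_ne_zero.2 D.eval_ne_zero)
  have hmul := hnear T hT z.1 hz.near
  rw [← hz.scale_mul_linCoeff, Int.cast_mul, abs_mul, ← scale] at hmul
  refine le_of_mul_le_mul_left (le_of_eq_of_le ?_ hmul) hscale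
  ring

variable (D) in
lemma exists_abs_constTerm_le [Finite σ] [Fintype μ] (hq : ∀ j, (q j).IsHomogeneous 2)
    (hR : R.IsHomogeneous 3) {η : ℝ} (hη : 0 < η) :
    ∃ ε > (0 : ℝ), ε ≤ 1 ∧ ∀ᶠ T in atTop, ∀ {L : ℕ} {δ : ℝ} {z : (σ → ℤ) × (μ → ℤ)}, δ ≤ 1 →
      D.IsAdmissible L δ ε T z → |(constTerm q R z : ℝ)| ≤ η * T ^ 4 := by
  have := Fintype.ofFinite σ
  set K := (∑ j, coeffNorm (q j)) * D.radius ^ 2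
  have hK : 0 ≤ K := mul_nonneg (sum_nonneg fun j _ => coeffNorm_nonneg _) (sq_nonneg _)
  have hε : K * min (η / (2 * (K + 1))) 1 ≤ η / 2 :=
    calc K * min (η / (2 * (K + 1))) 1 ≤ (K + 1) * (η / (2 * (K + 1))) := by
          gcongr
          · linarith only
          · exact min_le_left _ _
      _ = η / 2 := by field_simp
  refine ⟨min (η / (2 * (K + 1))) 1, by positivity, min_le_right _ _, ?_⟩
  filter_upwards [eventually_ge_atTop (coeffNorm R * D.radius ^ 3 / (η / 2)),
    eventually_ge_atTop 0] with T hTR hT L δ z hδ hz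
  rw [div_le_iff₀' (half_pos hη)] at hTR
  calc |(constTerm q R z : ℝ)|
      ≤ K * min (η / (2 * (K + 1))) 1 * T ^ 4 + coeffNorm R * D.radius ^ 3 * T ^ 3 := by
        refine (abs_constTerm_le hq hR (hz.abs_fst_le hδ hT) hz.abs_shift_le).trans_eq ?_
        ring
    _ ≤ η / 2 * T ^ 4 + η / 2 * T * T ^ 3 := by gcongr
    _ = η * T ^ 4 := by ring

variable (D) in
theorem exists_mul_pow_le_diagDepth [Finite σ] [Fintype μ] (hq : ∀ j, (q j).IsHomogeneous 2)
    (hR : R.IsHomogeneous 3) {L : ℕ} (hL : 0 < L) :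
    ∃ δ > (0 : ℝ), δ ≤ 1 ∧ ∃ ε > (0 : ℝ), ε ≤ 1 ∧ ∃ κ > (0 : ℝ), ∀ᶠ T in atTop,
      ∀ {z : (σ → ℤ) × (μ → ℤ)}, D.IsAdmissible L δ ε T z →
        |(constTerm q R z : ℝ)| ≤ (T ^ 2) ^ 2 ∧
        κ * T ^ 4 ≤ diagDepth (fun i => L * D.a i) (D.linCoeff z.1) (constTerm q R z) := by
  have hA : 1 ≤ L * D.a D.i₀ := Nat.mul_pos hL (D.a_pos D.i₀)
  have hA' : (1 : ℝ) ≤ (L * D.a D.i₀ : ℕ) := by exact_mod_cast hA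
  set κ : ℝ := 1 / (32 * (L * D.a D.i₀ : ℕ))
  have hκ : 0 < κ := by positivity
  have hκ1 : κ ≤ 1 := (div_le_one (by positivity)).2 (by linarith only [hA'])
  obtain ⟨δ, hδ, hδ1, hlin⟩ := D.exists_half_sq_le_abs_linCoeff hq
  obtain ⟨ε, hε, hε1, hconst⟩ := D.exists_abs_constTerm_le hq hR hκ
  refine ⟨δ, hδ, hδ1, ε, hε, hε1, κ, hκ, ?_⟩
  filter_upwards [hconst, eventually_gt_atTop 0] with T hconst hT z hz
  have hN := hconst hδ1 hz
  have hb : κ * T ^ 4 ≤ (D.linCoeff z.1 D.i₀ : ℝ) ^ 2 / (8 * (L * D.a D.i₀ : ℕ)) :=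
    calc κ * T ^ 4 = (T ^ 2 / 2) ^ 2 / (8 * (L * D.a D.i₀ : ℕ)) := by ring
      _ ≤ _ := by
          rw [← sq_abs (D.linCoeff z.1 D.i₀ : ℝ)]
          gcongr
          exact hlin hT hz
  refine ⟨hN.trans ?_, hb.trans
    (sq_div_le_diagDepth (A := fun i => L * D.a i) (((le_abs_self _).trans hN).trans hb))⟩
  rw [← pow_mul]
  exact mul_le_of_le_one_left (by positivity) hκ1

end DiagonalChart

end AdmissibleSize

/-! ### Counting -/

section Counting

variable {α β γ κ : Type*}

lemma exists_finset_modEq_abs_sub_le (v : ℤ) {n : ℤ} (hn : 0 < n) (c : ℝ) {X : ℝ} (hX : n ≤ X) :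
    ∃ s : Finset ℤ, (∀ y ∈ s, y ≡ v [ZMOD n] ∧ |(y : ℝ) - c| ≤ X) ∧ X / n ≤ #s := by
  have hn' : (0 : ℝ) < n := by exact_mod_cast hn
  refine ⟨(Icc ⌈(c - X - v) / n⌉ ⌊(c + X - v) / n⌋).image fun k => v + n * k, fun y hy => ?_, ?_⟩
  · obtain ⟨k, hk, rfl⟩ := mem_image.1 hy
    rw [mem_Icc, Int.ceil_le, Int.le_floor, div_le_iff₀ hn', le_div_iff₀ hn'] at hk
    refine ⟨Int.modEq_iff_dvd.2 ⟨-k, by ring⟩, abs_le.2 ?_⟩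
    push_cast
    constructor <;> linarith only [hk.1, hk.2]
  · have hinj : Function.Injective fun k => v + n * k :=
      (add_right_injective v).comp (mul_right_injective₀ hn.ne')
    rw [card_image_of_injective _ hinj, Int.card_Icc]
    have hlength : (c + X - v) / (n : ℝ) - (c - X - v) / n = X / n + X / n := by ring
    have hone : 1 ≤ X / n := (one_le_div hn').2 hX
    calc X / n ≤ ((⌊(c + X - v) / n⌋ + 1 - ⌈(c - X - v) / n⌉ : ℤ) : ℝ) := by
          push_cast
          linarith only [Int.ceil_lt_add_one ((c - X - v) / (n : ℝ)),
            Int.lt_floor_add_one ((c + X - v) / (n : ℝ)), hlength, hone]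
      _ ≤ _ := by exact_mod_cast Int.self_le_toNat _

lemma pow_card_le_card_piFinset [Fintype κ] [DecidableEq κ] {S : κ → Finset α} {s : Finset κ}
    {X : ℝ} (hX : 0 ≤ X) (hs : ∀ i ∈ s, X ≤ #(S i)) (hsc : ∀ i ∉ s, (S i).Nonempty) :
    X ^ #s ≤ #(Fintype.piFinset S) := by
  rw [Fintype.card_piFinset, Nat.cast_prod, ← prod_const, ← prod_mul_prod_compl s]
  refine (prod_le_prod (fun _ _ => hX) hs).trans (le_mul_of_one_le_right (by positivity) ?_)
  exact_mod_cast one_le_prod' fun i hi => card_pos.2 (hsc i (mem_compl.1 hi))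

lemma exists_finset_pi_modEq_abs_sub_le [Finite κ] (s : Finset κ) (w : κ → ℤ) {n : ℤ}
    (hn : 0 < n) (c : κ → ℝ) {X : ℝ} (hX : n ≤ X) :
    ∃ Y : Finset (κ → ℤ), (∀ y ∈ Y, (∀ i, y i ≡ w i [ZMOD n]) ∧ (∀ i ∉ s, y i = w i) ∧
      ∀ i ∈ s, |(y i : ℝ) - c i| ≤ X) ∧ (X / n) ^ #s ≤ #Y := by
  classical
  have := Fintype.ofFinite κ
  have hn' : (0 : ℝ) < n := by exact_mod_cast hn
  choose S hS hcard using fun i => exists_finset_modEq_abs_sub_le (w i) hn (c i) hX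
  refine ⟨Fintype.piFinset fun i => if i ∈ s then S i else {w i}, fun y hy => ?_,
    pow_card_le_card_piFinset (div_nonneg (hn'.le.trans hX) hn'.le) (fun i hi => ?_)
      fun i hi => ?_⟩
  · have hin (i : κ) (hi : i ∈ s) : y i ∈ S i := by
      simpa only [if_pos hi] using Fintype.mem_piFinset.1 hy i
    have hout (i : κ) (hi : i ∉ s) : y i = w i := by
      simpa only [if_neg hi, mem_singleton] using Fintype.mem_piFinset.1 hy i
    refine ⟨fun i => ?_, hout, fun i hi => (hS i _ (hin i hi)).2⟩
    by_cases hi : i ∈ s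
    · exact (hS i _ (hin i hi)).1
    · rw [hout i hi]
  · simpa only [if_pos hi] using hcard i
  · simpa only [if_neg hi] using singleton_nonempty (w i)

lemma exists_finset_apply_eq_modEq_abs_sub_le [Fintype κ] {v : κ → ℤ} {o : κ} (hv : v o = 0)
    {n : ℤ} (hn : 0 < n) (T : ℝ) {X : ℝ} (hX : n ≤ X) :
    ∃ Y : Finset (κ → ℤ), (∀ y ∈ Y, y o = n ∧ (∀ i, y i ≡ v i [ZMOD n]) ∧
      ∀ i, |(y i : ℝ) - T * v i| ≤ X) ∧ (X / n) ^ (Fintype.card κ - 1) ≤ #Y := by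
  classical
  obtain ⟨Y, hY, hcard⟩ := exists_finset_pi_modEq_abs_sub_le (univ.erase o)
    (Function.update v o n) hn (fun i => T * v i) hX
  rw [card_erase_of_mem (mem_univ o), card_univ] at hcard
  refine ⟨Y, fun y hy => ?_, hcard⟩
  obtain ⟨hmod, hfix, hnear⟩ := hY y hy
  have hyo : y o = n := by
    simpa only [Function.update_self] using hfix o (notMem_erase o univ)
  refine ⟨hyo, fun i => ?_, fun i => ?_⟩ <;> rcases eq_or_ne i o with rfl | hi
  · rw [hyo, hv]
    exact Int.modEq_zero_iff_dvd.2 dvd_rfl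
  · simpa only [Function.update_of_ne hi] using hmod i
  · have hn' : (0 : ℝ) < n := by exact_mod_cast hn
    rwa [hyo, hv, Int.cast_zero, mul_zero, sub_zero, abs_of_pos hn']
  · exact hnear i (mem_erase.2 ⟨hi, mem_univ i⟩)

lemma card_mul_le_ncard {Z : Finset α} {V : α → Set β} {S : Set γ} (hV : ∀ a, (V a).Finite)
    (hS : S.Finite) {x : ℝ} (hx : ∀ a ∈ Z, x ≤ (V a).ncard) {φ : α → β → γ}
    (hmaps : ∀ a ∈ Z, ∀ b ∈ V a, φ a b ∈ S)
    (hinj : ∀ a ∈ Z, ∀ a' ∈ Z, ∀ b b', φ a b = φ a' b' → a = a' ∧ b = b') :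
    #Z * x ≤ S.ncard := by
  set G : Finset (Σ _ : α, β) := Z.sigma fun a => (hV a).toFinset
  have hG : (#G : ℝ) = ∑ a ∈ Z, ((V a).ncard : ℝ) := by
    rw [card_sigma, Nat.cast_sum]
    exact sum_congr rfl fun a _ => by rw [Set.ncard_eq_toFinset_card _ (hV a)]
  have hle : #G ≤ S.ncard := by
    rw [← Set.ncard_coe_finset]
    refine Set.ncard_le_ncard_of_injOn (fun g => φ g.1 g.2) ?_ ?_ hS
    · rintro ⟨a, b⟩ hab
      obtain ⟨ha, hb⟩ := mem_sigma.1 hab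
      exact hmaps a ha b ((hV a).mem_toFinset.1 hb)
    · rintro ⟨a, b⟩ hab ⟨a', b'⟩ hab' heq
      obtain ⟨rfl, rfl⟩ := hinj a (mem_sigma.1 hab).1 a' (mem_sigma.1 hab').1 b b' heq
      rfl
  calc #Z * x = ∑ _a ∈ Z, x := by rw [sum_const, nsmul_eq_mul]
    _ ≤ (#G : ℝ) := (sum_le_sum hx).trans_eq hG.symm
    _ ≤ S.ncard := by exact_mod_cast hle

end Counting

section CubicCount

variable {σ ι μ : Type*} [Fintype σ] [Fintype ι] [Fintype μ] {o : σ} {f : ι → μ}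
  {F : MvPolynomial ι ℤ} {q : μ → MvPolynomial σ ℤ} {R : MvPolynomial σ ℤ}

lemma DiagonalChart.exists_finset_isAdmissible [DecidableEq ι] (D : DiagonalChart o F (q ∘ f))
    (hf : f.Injective) {L : ℕ} (hL : 0 < L) {δ ε : ℝ} (hδ : 0 < δ) (hε : 0 < ε) :
    ∃ c > (0 : ℝ), ∀ᶠ T in atTop, ∃ Z : Finset ((σ → ℤ) × (μ → ℤ)),
      (∀ z ∈ Z, D.IsAdmissible L δ ε T z) ∧
      c * (T ^ (Fintype.card σ - 1) * (T ^ 2) ^ (Fintype.card μ - Fintype.card ι)) ≤ #Z := by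
  classical
  have hn : 0 < D.scale ^ 2 * L := mul_pos (sq_pos_of_ne_zero D.eval_ne_zero) (by exact_mod_cast hL)
  set n := D.scale ^ 2 * L
  have : (0 : ℝ) < n := by exact_mod_cast hn
  refine ⟨(δ / n) ^ (Fintype.card σ - 1) * ε ^ (Fintype.card μ - Fintype.card ι), by positivity, ?_⟩
  filter_upwards [(tendsto_id.const_mul_atTop hδ).eventually_ge_atTop (n : ℝ),
    ((tendsto_pow_atTop two_ne_zero).const_mul_atTop hε).eventually_ge_atTop ((1 : ℤ) : ℝ),
    eventually_ge_atTop 0] with T hTn hT1 _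
  obtain ⟨Y, hY, hYcard⟩ := exists_finset_apply_eq_modEq_abs_sub_le D.v_o hn T hTn
  obtain ⟨W, hW, hWcard⟩ := exists_finset_pi_modEq_abs_sub_le (univ.image f)ᶜ 0 one_pos 0 hT1
  refine ⟨Y ×ˢ W, fun z hz => ?_, ?_⟩
  · obtain ⟨hzY, hzW⟩ := mem_product.1 hz
    obtain ⟨hyo, hmod, hnear⟩ := hY z.1 hzY
    obtain ⟨-, ht0, ht⟩ := hW z.2 hzW
    refine ⟨hyo, hmod, hnear, fun i => ?_, fun j => ?_⟩
    · exact ht0 (f i) fun h => mem_compl.1 h (mem_image_of_mem f (mem_univ i))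
    · by_cases hj : j ∈ (univ.image f)ᶜ
      · simpa only [Pi.zero_apply, sub_zero] using ht j hj
      · rw [ht0 j hj, Pi.zero_apply, Int.cast_zero, abs_zero]
        positivity
  · rw [card_compl, card_image_of_injective _ hf, card_univ, Int.cast_one, div_one] at hWcard
    rw [card_product, Nat.cast_mul]
    refine le_of_eq_of_le ?_ (mul_le_mul hYcard hWcard (by positivity) (Nat.cast_nonneg _))
    rw [id, mul_div_right_comm, mul_pow, mul_pow ε]
    ring

theorem exists_mul_pow_le_ncard_boundedZeros (hf : f.Injective) (hι : 5 ≤ Fintype.card ι)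
    (hF : F.IsHomogeneous 2) (hpos : ∀ v : ι → ℤ, v ≠ 0 → 0 < eval v F)
    (hq : ∀ j, (q j).IsHomogeneous 2) (hR : R.IsHomogeneous 3) (hqo : ∃ i, ¬ X o ∣ q (f i)) :
    ∃ c > (0 : ℝ), ∃ K > (0 : ℝ), ∀ᶠ T in atTop,
      c * (T ^ (Fintype.card σ - 1) * (T ^ 2) ^ (Fintype.card μ - Fintype.card ι) *
        (T ^ 4) ^ (Fintype.card ι / 2 - 1 : ℝ)) ≤ (boundedZeros o f F q R (K * T ^ 2)).ncard := by
  classical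
  obtain ⟨D⟩ := nonempty_diagonalChart (p := q ∘ f) hF hpos hqo
  obtain ⟨P, hP⟩ := exists_rpow_diagDepth_le_ncard_diagZeros hι
  have hA (i : ι) : 0 < D.level P * D.a i := Nat.mul_pos (D.level_pos P) (D.a_pos i)
  obtain ⟨c₁, hc₁, D₀, hfiber⟩ := hP _ D.i₀ hA (D.absorbsPrimes_level_mul P)
  obtain ⟨δ, hδ, hδ1, ε, hε, hε1, κ, hκ, hsize⟩ :=
    D.exists_mul_pow_le_diagDepth hq hR (D.level_pos P)
  obtain ⟨c₂, hc₂, hbase⟩ := D.exists_finset_isAdmissible hf (D.level_pos P) hδ hε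
  have hr : (0 : ℝ) ≤ Fintype.card ι / 2 - 1 := by
    have : (5 : ℝ) ≤ Fintype.card ι := by exact_mod_cast hι
    linarith only [this]
  set r : ℝ := Fintype.card ι / 2 - 1
  refine ⟨c₂ * (c₁ * κ ^ r), by positivity, D.boxConst, D.boxConst_pos, ?_⟩
  filter_upwards [hsize, hbase, eventually_ge_atTop 1,
    ((tendsto_pow_atTop four_ne_zero).const_mul_atTop hκ).eventually_ge_atTop D₀]
    with T hsize ⟨Z, hZ, hcard⟩ hT hD₀
  have hlarge (z : (σ → ℤ) × (μ → ℤ)) (hz : z ∈ Z) : c₁ * (κ * T ^ 4) ^ r ≤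
      (diagZeros (fun i => D.level P * D.a i) (D.linCoeff z.1) (constTerm q R z)).ncard := by
    have hdepth := (hsize (hZ z hz)).2
    refine le_trans ?_ (hfiber _ _ (hZ z hz).isCoprime_linCoeff_level_mul (hD₀.trans hdepth))
    gcongr
  have hcount := card_mul_le_ncard (fun z => finite_diagZeros hA)
    (finite_boundedZeros o f F q R (D.boxConst * T ^ 2)) hlarge (φ := D.point)
    (fun z hz u hu => (hZ z hz).point_mem_boundedZeros hf hq hR (D.level_pos P) hδ1 hε1 hT
      (hsize (hZ z hz)).1 hu) (fun z hz z' hz' u u' => (hZ z hz).point_inj hf (hZ z' hz'))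
  refine le_trans (le_of_eq_of_le ?_ (mul_le_mul_of_nonneg_right hcard (by positivity))) hcount
  rw [Real.mul_rpow hκ.le (by positivity)]
  ring

lemma pow_mul_pow_mul_rpow_eq {x : ℝ} (hx : 0 < x) {s m r : ℕ} (hs : 0 < s) (hrm : r ≤ m) :
    x ^ (s - 1) * (x ^ 2) ^ (m - r) * (x ^ 4) ^ (r / 2 - 1 : ℝ) =
      (x ^ 2) ^ (m - 2 + (s - 1) / 2 : ℝ) := by
  rw [← pow_mul, ← Real.rpow_natCast x (s - 1), ← Real.rpow_natCast x (2 * (m - r)),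
    ← Real.rpow_natCast x 4, ← Real.rpow_natCast x 2, ← Real.rpow_mul hx.le, ← Real.rpow_mul hx.le,
    ← Real.rpow_add hx, ← Real.rpow_add hx]
  congr 1
  push_cast [Nat.cast_sub hrm, Nat.cast_sub (Nat.one_le_iff_ne_zero.2 hs.ne')]
  ring

theorem exists_mul_rpow_le_ncard_boundedZeros (hf : f.Injective) (hι : 5 ≤ Fintype.card ι)
    (hF : F.IsHomogeneous 2) (hpos : ∀ v : ι → ℤ, v ≠ 0 → 0 < eval v F)
    (hq : ∀ j, (q j).IsHomogeneous 2) (hR : R.IsHomogeneous 3) (hqo : ∃ i, ¬ X o ∣ q (f i)) :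
    ∃ c > (0 : ℝ), ∀ᶠ B in atTop, c * B ^ (Fintype.card μ - 2 + (Fintype.card σ - 1) / 2 : ℝ) ≤
      (boundedZeros o f F q R B).ncard := by
  obtain ⟨c, hc, K, hK, hT⟩ := exists_mul_pow_le_ncard_boundedZeros hf hι hF hpos hq hR hqo
  set E : ℝ := Fintype.card μ - 2 + (Fintype.card σ - 1) / 2
  refine ⟨c * (1 / K) ^ E, by positivity, ?_⟩
  have hsqrt : Tendsto (fun B => √(B / K)) atTop atTop :=
    Real.tendsto_sqrt_atTop.comp (tendsto_id.atTop_div_const hK)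
  filter_upwards [hsqrt.eventually hT, eventually_gt_atTop 0] with B hB hB0
  have hsq : √(B / K) ^ 2 = B / K := Real.sq_sqrt (by positivity)
  rw [pow_mul_pow_mul_rpow_eq (Real.sqrt_pos.2 (by positivity)) (Fintype.card_pos_iff.2 ⟨o⟩)
    (Fintype.card_le_of_injective f hf), hsq, mul_div_cancel₀ B hK.ne'] at hB
  refine le_of_eq_of_le ?_ hB
  rw [div_eq_mul_one_div B K, Real.mul_rpow hB0.le (by positivity)]
  ring

end CubicCount

end CircleMethod

/-- For `C(x,y) = y₁·F(x₁,…,x_r) + Σ x_j q_j(y) + R(y)` with `F` positive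
definite of rank `5 ≤ r ≤ m` and `y₁ ∤ q_i` for some `1 ≤ i ≤ r`, one has
`N(B) ≫ B^{n-h-2+(h-1)/2}`. -/
theorem stmt1 (n h m r : ℕ) (hh : 0 < h) (hhn : h < n) (hm : m = n - h)
    (hr5 : 5 ≤ r) (hrm : r ≤ m)
    (F : MvPolynomial (Fin r) ℤ) (hF2 : F.IsHomogeneous 2)
    (hFpos : ∀ v : Fin r → ℝ, v ≠ 0 → 0 < aeval v F)
    (q : Fin m → MvPolynomial (Fin h) ℤ) (hq : ∀ j, (q j).IsHomogeneous 2)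
    (R : MvPolynomial (Fin h) ℤ) (hR : R.IsHomogeneous 3)
    (hndvd : ∃ i : Fin r, ¬ ((X ⟨0, hh⟩ : MvPolynomial (Fin h) ℤ) ∣ q (Fin.castLE hrm i))) :
    ∃ c > (0 : ℝ), ∃ B₀ : ℝ, ∀ B : ℝ, B₀ ≤ B →
      c * B ^ ((n : ℝ) - h - 2 + ((h : ℝ) - 1) / 2) ≤
        (Set.ncard {p : (Fin m → ℤ) × (Fin h → ℤ) |
          (∀ j, (|p.1 j| : ℝ) ≤ B) ∧ (∀ i, (|p.2 i| : ℝ) ≤ B) ∧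
          p.2 ⟨0, hh⟩ * eval (fun i : Fin r => p.1 (Fin.castLE hrm i)) F
            + ∑ j, p.1 j * eval p.2 (q j) + eval p.2 R = 0} : ℝ) := by
  have hpos (v : Fin r → ℤ) (hv : v ≠ 0) : 0 < eval v F := by
    have hreal : (fun i => (v i : ℝ)) ≠ 0 := fun h0 =>
      hv (funext fun i => Int.cast_eq_zero.1 (congrFun h0 i))
    have := hFpos _ hreal
    rw [CircleMethod.aeval_intCast] at this
    exact_mod_cast this
  obtain ⟨c, hc, hcount⟩ := CircleMethod.exists_mul_rpow_le_ncard_boundedZeros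
    (Fin.castLE_injective hrm) (by rwa [Fintype.card_fin]) hF2 hpos hq hR hndvd
  have hm' : (m : ℝ) = n - h := by rw [hm, Nat.cast_sub hhn.le]
  rw [Fintype.card_fin, Fintype.card_fin, hm'] at hcount
  obtain ⟨B₀, hB₀⟩ := Filter.eventually_atTop.1 hcount
  exact ⟨c, hc, B₀, hB₀⟩
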